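/- arXiv:2406.13687 — 3 statements merged into one kernel-verified Lean document; each statement's English description precedes it below -/
import Mathlib

section
/- For every integer d ≥ 1, lim_{x→∞} π_d(x)/π(x) = 0, where π_d(x) = card{p ≤ x : p prime and p + d prime} and π(x) is the number of primes ≤ x. -/
open Filter Topology

/-- The prime counting function `π(x)`: the number of primes `p` with `0 ≤ p ≤ x`. -/
noncomputable def primePiR (x : ℝ) : ℕ :=
  ((Finset.range (Nat.floor x + 1)).filter Nat.Prime).card

/-- `π_d(x)`: the number of primes `p` with `0 ≤ p ≤ x` such that `p + d` is also prime. -/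
noncomputable def primePidR (d : ℕ) (x : ℝ) : ℕ :=
  ((Finset.range (Nat.floor x + 1)).filter (fun p => Nat.Prime p ∧ Nat.Prime (p + d))).card

/-!
If `n > z` and `n + d` are both prime, then `n` avoids the classes `0` and `-d` modulo every prime
`p ≤ z`. To bound the number of such `n < N`, take for each `p` the function of mean zero modulo
`p` that is `-1` on the removed classes and constant elsewhere. The products of these functions
over the primes dividing the various squarefree `q` are pairwise orthogonal over a common period,
while on the sifted set their sum over `q ≤ z` is a constant `L`. Comparing second moments, the
sifted set has at most `N / L + z ^ 6` elements.

If `ν(p)` is the density removed modulo `p`, then `L` is a sum of products of `ν(p) / (1 - ν(p))`.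
Expanding these as geometric series, `L` is at least the sum of `2 ^ Ω(n) / n` over the `n ≤ z`
coprime to `2 * d`, where `Ω(n)` counts prime factors with multiplicity. As `2 ^ Ω(n)` is at least
the number of divisors of `n`, this sum dominates the square of `∑ 1 / a` over the `a ≤ √z` coprime
to `2 * d`, which is of order `(log z) ^ 2`. With `z` a small power of `x` we obtain
`π_d(x) = O(x / (log x) ^ 2)`, while `x / log x = O(π(x))` by Chebyshev.
-/

open Finset Function UniqueFactorizationMonoid Asymptotics

section PeriodicSums

lemma periodic_of_dvd {α : Type*} {f : ℕ → α} {a b : ℕ} (hf : Periodic f a) (hab : a ∣ b) :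
    Periodic f b := by
  obtain ⟨k, rfl⟩ := hab
  rw [mul_comm]
  exact hf.nat_mul k

lemma sum_range_mul_of_coprime {R : Type*} [CommSemiring R] {a b : ℕ} (ha : a ≠ 0) (hb : b ≠ 0)
    (hab : a.Coprime b) {f g : ℕ → R} (hf : Periodic f a) (hg : Periodic g b) :
    ∑ n ∈ range (a * b), f n * g n = (∑ n ∈ range a, f n) * ∑ n ∈ range b, g n := by
  rw [sum_mul_sum, ← sum_product']
  refine sum_nbij (fun n ↦ (n % a, n % b)) ?_ ?_ ?_ ?_
  · intro n _
    simp [Nat.mod_lt, Nat.pos_of_ne_zero, ha, hb]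
  · intro m hm n hn hmn
    have hmod : m ≡ n [MOD a * b] :=
      (Nat.modEq_and_modEq_iff_modEq_mul hab).1 (Prod.mk.inj hmn)
    exact hmod.eq_of_lt_of_lt (by simpa using hm) (by simpa using hn)
  · rintro ⟨u, v⟩ huv
    obtain ⟨hu, hv⟩ : u < a ∧ v < b := by simpa using huv
    obtain ⟨hua, hvb⟩ := (Nat.chineseRemainder hab u v).2
    refine ⟨Nat.chineseRemainder hab u v, ?_, Prod.ext ?_ ?_⟩
    · simpa using Nat.chineseRemainder_lt_mul hab u v ha hb
    · exact Eq.trans hua (Nat.mod_eq_of_lt hu)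
    · exact Eq.trans hvb (Nat.mod_eq_of_lt hv)
  · intro n _
    rw [hf.map_mod_nat, hg.map_mod_nat]

lemma sum_range_prod_of_pairwise_coprime {ι R : Type*} [CommSemiring R] {s : Finset ι}
    {m : ι → ℕ} (hm : ∀ i ∈ s, m i ≠ 0) (hcop : (s : Set ι).Pairwise (Nat.Coprime on m))
    {f : ι → ℕ → R} (hf : ∀ i ∈ s, Periodic (f i) (m i)) :
    ∑ n ∈ range (∏ i ∈ s, m i), ∏ i ∈ s, f i n = ∏ i ∈ s, ∑ n ∈ range (m i), f i n := by
  classical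
  induction s using Finset.induction_on with
  | empty => simp
  | insert i s hi ih =>
    rw [forall_mem_insert] at hm hf
    rw [coe_insert, Set.pairwise_insert_of_symm_of_notMem hi] at hcop
    simp only [prod_insert hi]
    rw [sum_range_mul_of_coprime hm.1 (prod_ne_zero_iff.2 hm.2)
      (Nat.Coprime.prod_right hcop.2) hf.1, ih hm.2 hcop.1 hf.2]
    have hperiodic : Periodic (∏ j ∈ s, f j) (∏ j ∈ s, m j) :=
      s.periodic_prod fun j hj ↦ periodic_of_dvd (hf.2 j hj) (dvd_prod_of_mem m hj)
    simpa only [← Finset.prod_apply] using hperiodic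

lemma sum_range_le_of_periodic {F : ℕ → ℝ} {T : ℕ} (hT : T ≠ 0) (hF : Periodic F T) {B : ℝ}
    (hB : ∀ n, F n ≤ B) (hsum : 0 ≤ ∑ n ∈ range T, F n) (N : ℕ) :
    ∑ n ∈ range N, F n ≤ N / T * ∑ n ∈ range T, F n + T * B := by
  have sum_le (M : ℕ) : ∑ n ∈ range M, F n ≤ M * B := by
    simpa using sum_le_card_nsmul (range M) F B fun n _ ↦ hB n
  have hT' : (0 : ℝ) < T := by positivity
  have hB₀ : 0 ≤ B := nonneg_of_mul_nonneg_right (hsum.trans (sum_le T)) hT'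
  induction N using Nat.strong_induction_on with
  | _ N ih =>
    rcases lt_or_ge N T with hNT | hTN
    · calc ∑ n ∈ range N, F n ≤ N * B := sum_le N
        _ ≤ T * B := by gcongr
        _ ≤ _ := le_add_of_nonneg_left (by positivity)
    · obtain ⟨k, rfl⟩ := Nat.exists_eq_add_of_le hTN
      have shift (n : ℕ) : F (T + n) = F n := by rw [add_comm, hF]
      have hk := ih k (by lia)
      simp only [sum_range_add, shift]
      rw [Nat.cast_add, add_div, div_self hT'.ne', one_add_mul]
      linarith

end PeriodicSums

section Orthogonality

/-- The product `∏_{p ∣ q} h_p(n)` over the primes dividing `q`. For `p`-periodic `h_p` of mean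
zero, these functions play the role of characters to the squarefree modulus `q`. -/
def primeFactorsProd {R : Type*} [CommMonoid R] (h : ℕ → ℕ → R) (q n : ℕ) : R :=
  ∏ p ∈ q.primeFactors, h p n

variable {R : Type*} [CommSemiring R] {h : ℕ → ℕ → R}

lemma primeFactorsProd_periodic (hper : ∀ p, Periodic (h p) p) (q : ℕ) :
    Periodic (primeFactorsProd h q) q := by
  have hprod : Periodic (∏ p ∈ q.primeFactors, h p) q :=
    q.primeFactors.periodic_prod fun p hp ↦
      periodic_of_dvd (hper p) (Nat.dvd_of_mem_primeFactors hp)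
  rwa [funext fun n ↦ Finset.prod_apply n q.primeFactors h] at hprod

lemma sum_range_primeFactorsProd (hper : ∀ p, Periodic (h p) p) {q : ℕ} (hq : Squarefree q) :
    ∑ n ∈ range q, primeFactorsProd h q n = ∏ p ∈ q.primeFactors, ∑ n ∈ range p, h p n := by
  have hprime {p : ℕ} (hp : p ∈ q.primeFactors) : p.Prime := Nat.prime_of_mem_primeFactors hp
  rw [← sum_range_prod_of_pairwise_coprime (fun p hp ↦ (hprime hp).ne_zero)
    (fun p hp r hr hpr ↦ (Nat.coprime_primes (hprime hp) (hprime hr)).2 hpr) fun p _ ↦ hper p,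
    Nat.prod_primeFactors_of_squarefree hq]
  rfl

lemma primeFactorsProd_eq_prod_ite_dvd {q Q : ℕ} (hqQ : q ∣ Q) (hQ : Q ≠ 0) (n : ℕ) :
    primeFactorsProd h q n = ∏ p ∈ Q.primeFactors, if p ∣ q then h p n else 1 := by
  rw [← prod_filter, primeFactorsProd]
  congr 1
  ext p
  have hq : q ≠ 0 := ne_zero_of_dvd_ne_zero hQ hqQ
  have hdvd : p ∣ q → p ∣ Q := fun hpq ↦ hpq.trans hqQ
  simp only [mem_filter, Nat.mem_primeFactors]
  tauto

lemma sum_range_primeFactorsProd_mul_eq_zero (hper : ∀ p, Periodic (h p) p)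
    (hmean : ∀ p, p.Prime → ∑ n ∈ range p, h p n = 0) {q r Q : ℕ} (hQ : Squarefree Q)
    (hqQ : q ∣ Q) (hrQ : r ∣ Q) (hqr : q ≠ r) :
    ∑ n ∈ range Q, primeFactorsProd h q n * primeFactorsProd h r n = 0 := by
  let f (p n : ℕ) : R := (if p ∣ q then h p n else 1) * (if p ∣ r then h p n else 1)
  have hf (p : ℕ) : Periodic (f p) p := fun n ↦ by simp only [f, hper p n]
  have hprod (n : ℕ) :
      primeFactorsProd h q n * primeFactorsProd h r n = primeFactorsProd f Q n := by
    rw [primeFactorsProd_eq_prod_ite_dvd hqQ hQ.ne_zero,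
      primeFactorsProd_eq_prod_ite_dvd hrQ hQ.ne_zero, ← prod_mul_distrib, primeFactorsProd]
  obtain ⟨p, hp, hpqr⟩ : ∃ p, p.Prime ∧ ¬(p ∣ q ↔ p ∣ r) := by
    contrapose! hqr
    exact (Nat.Squarefree.ext_iff (hQ.squarefree_of_dvd hqQ) (hQ.squarefree_of_dvd hrQ)).2 hqr
  have hpQ : p ∈ Q.primeFactors :=
    Nat.mem_primeFactors.2 ⟨hp, by by_cases hpq : p ∣ q <;> grind [dvd_trans], hQ.ne_zero⟩
  simp only [hprod]
  rw [sum_range_primeFactorsProd hf hQ]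
  refine prod_eq_zero hpQ ?_
  rw [← hmean p hp]
  by_cases hpq : p ∣ q <;> by_cases hpr : p ∣ r <;> simp_all [f]

end Orthogonality

section SelbergSum

/-- Selberg's weight `g(q) = ∏_{p ∣ q} ν(p) / (1 - ν(p))`, where `ν(p)` is the proportion of
residue classes removed modulo `p`. -/
noncomputable def selbergWeight (ν : ℕ → ℝ) (q : ℕ) : ℝ :=
  ∏ p ∈ q.primeFactors, ν p / (1 - ν p)

/-- The sum of `selbergWeight` over the squarefree integers `1 ≤ q ≤ z`: its reciprocal is the
sieve's upper bound for the density of the sifted set. -/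
noncomputable def selbergSum (ν : ℕ → ℝ) (z : ℕ) : ℝ :=
  ∑ q ∈ Icc 1 z with Squarefree q, selbergWeight ν q

lemma selbergSum_congr {μ ν : ℕ → ℝ} (hμν : ∀ p, p.Prime → μ p = ν p) {z : ℕ} :
    selbergSum μ z = selbergSum ν z :=
  sum_congr rfl fun _ _ ↦ prod_congr rfl fun p hp ↦ by
    rw [hμν p (Nat.prime_of_mem_primeFactors hp)]

variable {ν : ℕ → ℝ} (hν₀ : ∀ p, p.Prime → 0 ≤ ν p) (hν₁ : ∀ p, p.Prime → ν p < 1)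

include hν₀ hν₁

lemma selbergWeight_nonneg (q : ℕ) : 0 ≤ selbergWeight ν q :=
  prod_nonneg fun p hp ↦
    have hp := Nat.prime_of_mem_primeFactors hp
    div_nonneg (hν₀ p hp) (sub_nonneg.2 (hν₁ p hp).le)

lemma one_le_selbergSum {z : ℕ} (hz : 1 ≤ z) : 1 ≤ selbergSum ν z := by
  have hone : selbergWeight ν 1 ≤ selbergSum ν z :=
    single_le_sum (fun q _ ↦ selbergWeight_nonneg hν₀ hν₁ q) (by simp [hz])
  simpa [selbergWeight] using hone

end SelbergSum

section Sieve

/-- The proportion of the residue classes modulo `p` that lie in `Ω p`. -/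
noncomputable def removedDensity (Ω : ∀ p : ℕ, Finset (ZMod p)) (p : ℕ) : ℝ := #(Ω p) / p

/-- The function on residues modulo `p` that is constant on `Ω p` and off `Ω p`, has mean zero,
and is `-1` on `Ω p`. -/
noncomputable def balancedIndicator (Ω : ∀ p : ℕ, Finset (ZMod p)) (p n : ℕ) : ℝ :=
  if (n : ZMod p) ∈ Ω p then -1 else removedDensity Ω p / (1 - removedDensity Ω p)

variable {Ω : ∀ p : ℕ, Finset (ZMod p)}

lemma balancedIndicator_periodic (p : ℕ) : Periodic (balancedIndicator Ω p) p := fun n ↦ by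
  simp [balancedIndicator]

lemma removedDensity_nonneg (p : ℕ) : 0 ≤ removedDensity Ω p := by
  unfold removedDensity
  positivity

lemma removedDensity_lt_one {p : ℕ} (hΩ : #(Ω p) < p) : removedDensity Ω p < 1 := by
  rw [removedDensity, div_lt_one (by exact_mod_cast hΩ.pos)]
  exact_mod_cast hΩ

lemma card_filter_range_natCast_mem {p : ℕ} (hp : p ≠ 0) (s : Finset (ZMod p)) :
    #{n ∈ range p | ((n : ℕ) : ZMod p) ∈ s} = #s := by
  have : NeZero p := ⟨hp⟩
  refine card_nbij (fun n ↦ (n : ZMod p)) (fun n hn ↦ (mem_filter.1 hn).2) ?_ ?_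
  · intro m hm n hn hmn
    simp only [coe_filter, mem_range, Set.mem_ofPred_eq] at hm hn
    exact ((ZMod.natCast_eq_natCast_iff _ _ _).1 hmn).eq_of_lt_of_lt hm.1 hn.1
  · intro a ha
    exact ⟨a.val, by simpa [ZMod.val_lt] using ha, ZMod.natCast_zmod_val a⟩

lemma sum_range_ite_natCast_mem {p : ℕ} (hp : p ≠ 0) (u v : ℝ) :
    ∑ n ∈ range p, (if (n : ZMod p) ∈ Ω p then u else v) =
      p * (removedDensity Ω p * u + (1 - removedDensity Ω p) * v) := by
  have hin := card_filter_range_natCast_mem hp (Ω p)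
  have hout : (#{n ∈ range p | ¬((n : ℕ) : ZMod p) ∈ Ω p} : ℝ) = p - #(Ω p) := by
    rw [eq_sub_iff_add_eq', ← hin, ← Nat.cast_add, card_filter_add_card_filter_not, card_range]
  rw [sum_ite, sum_const, sum_const, nsmul_eq_mul, nsmul_eq_mul, hin, hout, removedDensity]
  field_simp

lemma sum_range_balancedIndicator {p : ℕ} (hΩ : #(Ω p) < p) :
    ∑ n ∈ range p, balancedIndicator Ω p n = 0 := by
  have hne : 1 - removedDensity Ω p ≠ 0 := (sub_pos.2 (removedDensity_lt_one hΩ)).ne'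
  unfold balancedIndicator
  rw [sum_range_ite_natCast_mem hΩ.ne_bot]
  field_simp
  ring

lemma sum_range_balancedIndicator_sq {p : ℕ} (hΩ : #(Ω p) < p) :
    ∑ n ∈ range p, balancedIndicator Ω p n ^ 2 =
      p * (removedDensity Ω p / (1 - removedDensity Ω p)) := by
  have hne : 1 - removedDensity Ω p ≠ 0 := (sub_pos.2 (removedDensity_lt_one hΩ)).ne'
  simp only [balancedIndicator, ite_pow]
  rw [sum_range_ite_natCast_mem hΩ.ne_bot]
  field_simp
  ring

lemma abs_balancedIndicator_le {p : ℕ} (hΩ : #(Ω p) < p) (n : ℕ) :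
    |balancedIndicator Ω p n| ≤ p := by
  have hp : (1 : ℝ) ≤ p := by exact_mod_cast hΩ.pos
  have hodds : removedDensity Ω p / (1 - removedDensity Ω p) = #(Ω p) / (p - #(Ω p)) := by
    rw [removedDensity]
    field_simp
  have hgap : (#(Ω p) : ℝ) + 1 ≤ p := by exact_mod_cast hΩ
  have hcard : (0 : ℝ) ≤ #(Ω p) := by positivity
  unfold balancedIndicator
  split_ifs
  · simpa using hp
  · rw [hodds, abs_of_nonneg (div_nonneg hcard (by linarith))]
    exact (div_le_self hcard (by linarith)).trans (by linarith)

/-- The trial function of the sieve, constant equal to `selbergSum (removedDensity Ω) z` on the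
sifted set. -/
noncomputable def siftingSum (Ω : ∀ p : ℕ, Finset (ZMod p)) (z n : ℕ) : ℝ :=
  ∑ q ∈ Icc 1 z with Squarefree q, primeFactorsProd (balancedIndicator Ω) q n

lemma siftingSum_eq_selbergSum {z n : ℕ}
    (hn : ∀ p, p.Prime → p ≤ z → (n : ZMod p) ∉ Ω p) :
    siftingSum Ω z n = selbergSum (removedDensity Ω) z := by
  refine sum_congr rfl fun q hq ↦ prod_congr rfl fun p hp ↦ if_neg (hn p ?_ ?_)
  · exact Nat.prime_of_mem_primeFactors hp
  · have hqz : q ≤ z := (mem_Icc.1 (mem_filter.1 hq).1).2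
    exact (Nat.le_of_mem_primeFactors hp).trans hqz

variable (hΩ : ∀ p, p.Prime → #(Ω p) < p)

include hΩ

lemma abs_primeFactorsProd_balancedIndicator_le {q : ℕ} (hq : q ≠ 0) (n : ℕ) :
    |primeFactorsProd (balancedIndicator Ω) q n| ≤ q :=
  calc |primeFactorsProd (balancedIndicator Ω) q n|
      = ∏ p ∈ q.primeFactors, |balancedIndicator Ω p n| := abs_prod _ _
    _ ≤ ∏ p ∈ q.primeFactors, (p : ℝ) := prod_le_prod (fun _ _ ↦ abs_nonneg _) fun p hp ↦
        abs_balancedIndicator_le (hΩ p (Nat.prime_of_mem_primeFactors hp)) n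
    _ ≤ q := by
        rw [← Nat.cast_prod]
        exact Nat.cast_le.2 (Nat.le_of_dvd (Nat.pos_of_ne_zero hq) (Nat.prod_primeFactors_dvd q))

lemma sum_range_primeFactorsProd_balancedIndicator_sq {q : ℕ} (hq : Squarefree q) :
    ∑ n ∈ range q, primeFactorsProd (balancedIndicator Ω) q n ^ 2 =
      q * selbergWeight (removedDensity Ω) q := by
  simp only [primeFactorsProd, ← prod_pow]
  calc ∑ n ∈ range q, primeFactorsProd (fun p n ↦ balancedIndicator Ω p n ^ 2) q n
      = ∏ p ∈ q.primeFactors, ∑ n ∈ range p, balancedIndicator Ω p n ^ 2 :=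
        sum_range_primeFactorsProd
          (fun p n ↦ congrArg (· ^ 2) (balancedIndicator_periodic p n)) hq
    _ = ∏ p ∈ q.primeFactors, (p * (removedDensity Ω p / (1 - removedDensity Ω p))) :=
        prod_congr rfl fun p hp ↦
          sum_range_balancedIndicator_sq (hΩ p (Nat.prime_of_mem_primeFactors hp))
    _ = q * selbergWeight (removedDensity Ω) q := by
        rw [prod_mul_distrib, ← Nat.cast_prod, Nat.prod_primeFactors_of_squarefree hq,
          selbergWeight]

lemma sum_range_primeFactorsProd_balancedIndicator_sq_le {q : ℕ} (hq : Squarefree q) (N : ℕ) :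
    ∑ n ∈ range N, primeFactorsProd (balancedIndicator Ω) q n ^ 2 ≤
      N * selbergWeight (removedDensity Ω) q + (q : ℝ) ^ 3 := by
  have hq₀ : (q : ℝ) ≠ 0 := Nat.cast_ne_zero.2 hq.ne_zero
  have hperiodic : Periodic (fun n ↦ primeFactorsProd (balancedIndicator Ω) q n ^ 2) q := fun n ↦
    congrArg (· ^ 2) (primeFactorsProd_periodic balancedIndicator_periodic q n)
  have hbound (n : ℕ) : primeFactorsProd (balancedIndicator Ω) q n ^ 2 ≤ (q : ℝ) ^ 2 :=
    sq_le_sq' (neg_le_of_abs_le (abs_primeFactorsProd_balancedIndicator_le hΩ hq.ne_zero n))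
      (le_of_abs_le (abs_primeFactorsProd_balancedIndicator_le hΩ hq.ne_zero n))
  calc ∑ n ∈ range N, primeFactorsProd (balancedIndicator Ω) q n ^ 2
      ≤ N / q * ∑ n ∈ range q, primeFactorsProd (balancedIndicator Ω) q n ^ 2 + q * (q : ℝ) ^ 2 :=
        sum_range_le_of_periodic hq.ne_zero hperiodic hbound
          (sum_nonneg fun _ _ ↦ sq_nonneg _) N
    _ = N * selbergWeight (removedDensity Ω) q + (q : ℝ) ^ 3 := by
        rw [sum_range_primeFactorsProd_balancedIndicator_sq hΩ hq]
        field_simp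

lemma sum_range_primeFactorsProd_balancedIndicator_mul_le {q r : ℕ} (hq : Squarefree q)
    (hr : Squarefree r) (hqr : q ≠ r) (N : ℕ) :
    ∑ n ∈ range N, primeFactorsProd (balancedIndicator Ω) q n *
        primeFactorsProd (balancedIndicator Ω) r n ≤ ((q : ℝ) * r) ^ 2 := by
  set H := primeFactorsProd (balancedIndicator Ω)
  set Q := radical (q * r)
  have hmul : q * r ≠ 0 := mul_ne_zero hq.ne_zero hr.ne_zero
  have hqQ : q ∣ Q := (dvd_radical_iff hq.isRadical hmul).2 (dvd_mul_right q r)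
  have hrQ : r ∣ Q := (dvd_radical_iff hr.isRadical hmul).2 (dvd_mul_left r q)
  have hQ : Squarefree Q := squarefree_radical
  have hQle : (Q : ℝ) ≤ q * r := by exact_mod_cast Nat.radical_le_self_iff.2 hmul
  have hperiodic : Periodic (fun n ↦ H q n * H r n) Q :=
    (periodic_of_dvd (primeFactorsProd_periodic balancedIndicator_periodic q) hqQ).mul
      (periodic_of_dvd (primeFactorsProd_periodic balancedIndicator_periodic r) hrQ)
  have hbound (n : ℕ) : H q n * H r n ≤ q * r := by
    refine (le_abs_self _).trans ?_
    rw [abs_mul]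
    exact mul_le_mul (abs_primeFactorsProd_balancedIndicator_le hΩ hq.ne_zero n)
      (abs_primeFactorsProd_balancedIndicator_le hΩ hr.ne_zero n) (abs_nonneg _) (by positivity)
  have horthogonal : ∑ n ∈ range Q, H q n * H r n = 0 :=
    sum_range_primeFactorsProd_mul_eq_zero balancedIndicator_periodic
      (fun p hp ↦ sum_range_balancedIndicator (hΩ p hp)) hQ hqQ hrQ hqr
  calc ∑ n ∈ range N, H q n * H r n
      ≤ N / Q * ∑ n ∈ range Q, H q n * H r n + Q * (q * r : ℝ) :=
        sum_range_le_of_periodic hQ.ne_zero hperiodic hbound horthogonal.ge N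
    _ = Q * (q * r : ℝ) := by rw [horthogonal, mul_zero, zero_add]
    _ ≤ ((q : ℝ) * r) ^ 2 := by
        rw [sq]
        gcongr

lemma sum_range_primeFactorsProd_balancedIndicator_mul_le_ite {q r z : ℕ}
    (hq : Squarefree q) (hqz : q ≤ z) (hr : Squarefree r) (hrz : r ≤ z) (N : ℕ) :
    ∑ n ∈ range N, primeFactorsProd (balancedIndicator Ω) q n *
        primeFactorsProd (balancedIndicator Ω) r n ≤
      (if q = r then N * selbergWeight (removedDensity Ω) q else 0) + (z : ℝ) ^ 4 := by
  split_ifs with hqr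
  · subst hqr
    have hq₁ : (1 : ℝ) ≤ q := Nat.one_le_cast.2 (Nat.one_le_iff_ne_zero.2 hq.ne_zero)
    simp only [← sq]
    refine (sum_range_primeFactorsProd_balancedIndicator_sq_le hΩ hq N).trans ?_
    gcongr
    calc (q : ℝ) ^ 3 ≤ (q : ℝ) ^ 4 := pow_le_pow_right₀ hq₁ (by norm_num)
      _ ≤ (z : ℝ) ^ 4 := by gcongr
  · rw [zero_add]
    refine (sum_range_primeFactorsProd_balancedIndicator_mul_le hΩ hq hr hqr N).trans ?_
    calc ((q : ℝ) * r) ^ 2 ≤ ((z : ℝ) * z) ^ 2 := by gcongr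
      _ = (z : ℝ) ^ 4 := by ring

lemma sum_range_siftingSum_sq_le (N z : ℕ) :
    ∑ n ∈ range N, siftingSum Ω z n ^ 2 ≤
      N * selbergSum (removedDensity Ω) z + (z : ℝ) ^ 6 := by
  set H := primeFactorsProd (balancedIndicator Ω)
  let D : Finset ℕ := {q ∈ Icc 1 z | Squarefree q}
  have mem_D {q : ℕ} (hq : q ∈ D) : Squarefree q ∧ q ≤ z :=
    ⟨(mem_filter.1 hq).2, (mem_Icc.1 (mem_filter.1 hq).1).2⟩
  have hcard : (#D : ℝ) ≤ z := by
    exact_mod_cast (card_filter_le _ _).trans_eq (by simp)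
  calc ∑ n ∈ range N, siftingSum Ω z n ^ 2
      = ∑ q ∈ D, ∑ r ∈ D, ∑ n ∈ range N, H q n * H r n := by
        simp only [siftingSum, sq, sum_mul_sum]
        rw [sum_comm]
        exact sum_congr rfl fun q _ ↦ sum_comm
    _ ≤ ∑ q ∈ D, ∑ r ∈ D,
          ((if q = r then N * selbergWeight (removedDensity Ω) q else 0) + (z : ℝ) ^ 4) :=
        sum_le_sum fun q hq ↦ sum_le_sum fun r hr ↦
          sum_range_primeFactorsProd_balancedIndicator_mul_le_ite hΩ (mem_D hq).1 (mem_D hq).2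
            (mem_D hr).1 (mem_D hr).2 N
    _ = N * selbergSum (removedDensity Ω) z + #D * (#D * (z : ℝ) ^ 4) := by
        simp only [sum_add_distrib, sum_ite_eq, sum_const, nsmul_eq_mul, selbergSum, mul_sum]
        exact congrArg (· + _) (sum_congr rfl fun q hq ↦ if_pos hq)
    _ ≤ N * selbergSum (removedDensity Ω) z + z * (z * (z : ℝ) ^ 4) := by gcongr
    _ = N * selbergSum (removedDensity Ω) z + (z : ℝ) ^ 6 := by ring

theorem card_sifted_le {N z : ℕ} (hz : 1 ≤ z) {S : Finset ℕ} (hSN : S ⊆ range N)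
    (hS : ∀ n ∈ S, ∀ p, p.Prime → p ≤ z → (n : ZMod p) ∉ Ω p) :
    (#S : ℝ) ≤ N / selbergSum (removedDensity Ω) z + (z : ℝ) ^ 6 := by
  set L := selbergSum (removedDensity Ω) z
  have hL : 1 ≤ L := one_le_selbergSum (fun p _ ↦ removedDensity_nonneg p)
    (fun p hp ↦ removedDensity_lt_one (hΩ p hp)) hz
  have hmul : #S * L ^ 2 ≤ N * L + (z : ℝ) ^ 6 :=
    calc #S * L ^ 2 = ∑ n ∈ S, siftingSum Ω z n ^ 2 := by
          rw [sum_congr rfl fun n hn ↦ by rw [siftingSum_eq_selbergSum (hS n hn)], sum_const,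
            nsmul_eq_mul]
      _ ≤ ∑ n ∈ range N, siftingSum Ω z n ^ 2 :=
          sum_le_sum_of_subset_of_nonneg hSN fun _ _ _ ↦ sq_nonneg _
      _ ≤ N * L + (z : ℝ) ^ 6 := sum_range_siftingSum_sq_le hΩ N z
  calc (#S : ℝ) ≤ (N * L + (z : ℝ) ^ 6) / L ^ 2 := (le_div_iff₀ (by positivity)).2 hmul
    _ = N / L + (z : ℝ) ^ 6 / L ^ 2 := by
        field_simp
    _ ≤ N / L + (z : ℝ) ^ 6 := by
        gcongr
        exact div_le_self (by positivity) (one_le_pow₀ hL)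

end Sieve

section CompletelyMultiplicative

variable {f : ℕ →* ℝ} (hf₀ : ∀ n, 0 ≤ f n) (hf₁ : ∀ p, p.Prime → f p < 1)

include hf₀ hf₁

lemma sum_le_prod_one_sub_inv {s T : Finset ℕ} (hs : ∀ p ∈ s, p.Prime)
    (hT : ∀ n ∈ T, n ∈ Nat.factoredNumbers s) : ∑ n ∈ T, f n ≤ ∏ p ∈ s, (1 - f p)⁻¹ := by
  have hEuler := (EulerProduct.summable_and_hasSum_factoredNumbers_prod_filter_prime_geometric
    (f := f) (fun hp ↦ by simpa [abs_of_nonneg (hf₀ _)] using hf₁ _ hp) s).2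
  rw [filter_true_of_mem hs] at hEuler
  rw [← sum_subtype_of_mem f hT]
  exact sum_le_hasSum _ (fun n _ ↦ hf₀ n) hEuler

lemma sum_filter_radical_eq_le_selbergWeight {q : ℕ} (hq : Squarefree q) {T : Finset ℕ}
    (hT : 0 ∉ T) : ∑ n ∈ T with radical n = q, f n ≤ selbergWeight f q := by
  set U := {n ∈ T | radical n = q}
  have hdvd {n : ℕ} (hn : n ∈ U) : q * (n / q) = n :=
    Nat.mul_div_cancel' ((mem_filter.1 hn).2 ▸ radical_dvd_self)
  have hfactored {n : ℕ} (hn : n ∈ U) : n / q ∈ Nat.factoredNumbers q.primeFactors := by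
    have hn₀ : n ≠ 0 := ne_of_mem_of_not_mem (mem_filter.1 hn).1 hT
    rw [← (mem_filter.1 hn).2, Nat.primeFactors_radical]
    exact Nat.mem_factoredNumbers_of_dvd
      (Nat.mem_factoredNumbers_of_primeFactors_subset hn₀ Subset.rfl)
      (Nat.div_dvd_of_dvd radical_dvd_self)
  calc ∑ n ∈ U, f n = f q * ∑ m ∈ U.image (· / q), f m := by
        rw [sum_image fun m hm n hn hmn ↦ by rw [← hdvd hm, ← hdvd hn, hmn], mul_sum]
        exact sum_congr rfl fun n hn ↦ by rw [← map_mul, hdvd hn]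
    _ ≤ f q * ∏ p ∈ q.primeFactors, (1 - f p)⁻¹ := by
        gcongr
        · exact hf₀ q
        · refine sum_le_prod_one_sub_inv hf₀ hf₁ (fun p hp ↦ Nat.prime_of_mem_primeFactors hp) ?_
          exact forall_mem_image.2 fun n hn ↦ hfactored hn
    _ = selbergWeight f q := by
        nth_rw 1 [← Nat.prod_primeFactors_of_squarefree hq]
        rw [map_prod, ← prod_mul_distrib]
        simp only [selbergWeight, div_eq_mul_inv]

theorem sum_Icc_le_selbergSum (z : ℕ) : ∑ n ∈ Icc 1 z, f n ≤ selbergSum f z := by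
  have hradical : ∀ n ∈ Icc 1 z, radical n ∈ {q ∈ Icc 1 z | Squarefree q} := by
    intro n hn
    rw [mem_Icc] at hn
    have hle : radical n ≤ n := Nat.radical_le_self_iff.2 (by lia)
    exact mem_filter.2 ⟨mem_Icc.2 ⟨Nat.radical_pos n, hle.trans hn.2⟩, squarefree_radical⟩
  rw [← sum_fiberwise_of_maps_to hradical]
  exact sum_le_sum fun q hq ↦
    sum_filter_radical_eq_le_selbergWeight hf₀ hf₁ (mem_filter.1 hq).2 (by simp)

end CompletelyMultiplicative

section DivisorSum

open ArithmeticFunction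

lemma card_divisors_le_two_pow_cardFactors {n : ℕ} (hn : n ≠ 0) :
    #n.divisors ≤ 2 ^ cardFactors n := by
  rw [Nat.card_divisors hn, cardFactors_eq_sum_factorization, Finsupp.sum, ← prod_pow_eq_pow_sum,
    Nat.support_factorization]
  exact prod_le_prod' fun p _ ↦ Nat.lt_two_pow_self

lemma card_filter_mul_eq_le_card_divisors (s : Finset (ℕ × ℕ)) {n : ℕ} (hn : n ≠ 0) :
    #{ab ∈ s | ab.1 * ab.2 = n} ≤ #n.divisors := by
  have hcard : #n.divisorsAntidiagonal = #n.divisors := by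
    rw [← Nat.map_div_right_divisors, card_map]
  rw [← hcard]
  exact card_le_card fun ab hab ↦ Nat.mem_divisorsAntidiagonal.2 ⟨(mem_filter.1 hab).2, hn⟩

/-- The completely multiplicative function with value `2 / p` at the primes `p ∤ m` and `0` at the
primes `p ∣ m`. -/
noncomputable def twoPowCardFactorsDiv (m : ℕ) : ℕ →* ℝ where
  toFun n := if n.Coprime m then 2 ^ cardFactors n / n else 0
  map_one' := by simp
  map_mul' a b := by
    rcases eq_or_ne a 0 with rfl | ha
    · simp
    rcases eq_or_ne b 0 with rfl | hb
    · simp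
    rw [cardFactors_mul ha hb, pow_add, Nat.cast_mul, mul_div_mul_comm, ite_zero_mul_ite_zero]
    simp only [Nat.coprime_mul_iff_left]

lemma twoPowCardFactorsDiv_apply (m n : ℕ) :
    twoPowCardFactorsDiv m n = if n.Coprime m then 2 ^ cardFactors n / (n : ℝ) else 0 := rfl

lemma twoPowCardFactorsDiv_nonneg (m n : ℕ) : 0 ≤ twoPowCardFactorsDiv m n := by
  rw [twoPowCardFactorsDiv_apply]
  positivity

lemma twoPowCardFactorsDiv_prime (m : ℕ) {p : ℕ} (hp : p.Prime) :
    twoPowCardFactorsDiv m p = if p ∣ m then 0 else 2 / (p : ℝ) := by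
  simp only [twoPowCardFactorsDiv_apply, cardFactors_apply_prime hp, pow_one,
    hp.coprime_iff_not_dvd, ite_not]

lemma sq_sum_coprime_inv_le_sum_twoPowCardFactorsDiv (m y : ℕ) :
    (∑ a ∈ Icc 1 y with a.Coprime m, (a : ℝ)⁻¹) ^ 2 ≤
      ∑ n ∈ Icc 1 (y ^ 2), twoPowCardFactorsDiv m n := by
  let A : Finset ℕ := {a ∈ Icc 1 y | a.Coprime m}
  have hA {a : ℕ} (ha : a ∈ A) : (1 ≤ a ∧ a ≤ y) ∧ a.Coprime m := by simpa [A] using ha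
  have hmaps : ∀ ab ∈ A ×ˢ A, ab.1 * ab.2 ∈ Icc 1 (y ^ 2) := by
    rintro ⟨a, b⟩ hab
    obtain ⟨ha, hb⟩ := mem_product.1 hab
    rw [mem_Icc, sq]
    exact ⟨Nat.mul_pos (hA ha).1.1 (hA hb).1.1, Nat.mul_le_mul (hA ha).1.2 (hA hb).1.2⟩
  rw [sq, sum_mul_sum, ← sum_product', ← sum_fiberwise_of_maps_to hmaps]
  refine sum_le_sum fun n hn ↦ ?_
  have hn₀ : n ≠ 0 := Nat.one_le_iff_ne_zero.1 (mem_Icc.1 hn).1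
  set P := {ab ∈ A ×ˢ A | ab.1 * ab.2 = n}
  have hcard : #P ≤ 2 ^ cardFactors n :=
    (card_filter_mul_eq_le_card_divisors _ hn₀).trans (card_divisors_le_two_pow_cardFactors hn₀)
  have hsum : ∑ ab ∈ P, (ab.1 : ℝ)⁻¹ * (ab.2 : ℝ)⁻¹ = #P / n := by
    rw [div_eq_mul_inv, ← nsmul_eq_mul]
    refine sum_eq_card_nsmul fun ab hab ↦ ?_
    rw [← (mem_filter.1 hab).2, Nat.cast_mul, mul_inv]
  rw [hsum, twoPowCardFactorsDiv_apply]
  split_ifs with hcop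
  · gcongr
    exact_mod_cast hcard
  · have hempty : P = ∅ := by
      refine filter_eq_empty_iff.2 fun ab hab habn ↦ hcop ?_
      rw [← habn]
      exact (hA (mem_product.1 hab).1).2.mul_left (hA (mem_product.1 hab).2).2
    simp [hempty]

lemma log_div_le_sum_coprime_inv {m : ℕ} (hm : m ≠ 0) (K : ℕ) :
    Real.log (K + 1) / m ≤ ∑ a ∈ Icc 1 (m * K) with a.Coprime m, (a : ℝ)⁻¹ := by
  have hinj : Set.InjOn (fun k ↦ m * k + 1) (range K) := fun j _ k _ hjk ↦ by simpa [hm] using hjk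
  calc Real.log (K + 1) / m ≤ (harmonic K : ℝ) / m := by
        gcongr
        exact_mod_cast log_add_one_le_harmonic K
    _ = ∑ k ∈ range K, ((m * (k + 1) : ℕ) : ℝ)⁻¹ := by
        simp [harmonic, div_eq_mul_inv, sum_mul]
    _ ≤ ∑ k ∈ range K, ((m * k + 1 : ℕ) : ℝ)⁻¹ := by
        gcongr
        lia
    _ = ∑ a ∈ (range K).image (fun k ↦ m * k + 1), (a : ℝ)⁻¹ := by rw [sum_image hinj]
    _ ≤ ∑ a ∈ Icc 1 (m * K) with a.Coprime m, (a : ℝ)⁻¹ := by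
        refine sum_le_sum_of_subset_of_nonneg ?_ fun _ _ _ ↦ by positivity
        refine image_subset_iff.2 fun k hk ↦ mem_filter.2 ⟨mem_Icc.2 ⟨by lia, ?_⟩, by simp⟩
        have hkK := mem_range.1 hk
        nlinarith [Nat.pos_of_ne_zero hm]

end DivisorSum

section PrimePairs

/-- The residue classes modulo `p` that contain no large prime `n` with `n + d` prime. Nothing is
removed modulo the primes dividing `2 * d`, so that every modulus keeps a residue class. -/
def primePairClasses (d p : ℕ) : Finset (ZMod p) :=
  if p ∣ 2 * d then ∅ else {0, -(d : ZMod p)}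

lemma card_primePairClasses (d p : ℕ) :
    #(primePairClasses d p) = if p ∣ 2 * d then 0 else 2 := by
  unfold primePairClasses
  split_ifs with hpd
  · rfl
  · refine card_pair fun h ↦ hpd (Dvd.dvd.mul_left ?_ 2)
    rw [← ZMod.natCast_eq_zero_iff, ← neg_eq_zero, ← h]

lemma card_primePairClasses_lt (d : ℕ) {p : ℕ} (hp : p.Prime) : #(primePairClasses d p) < p := by
  rw [card_primePairClasses]
  split_ifs with hpd
  · exact hp.pos
  · exact hp.two_le.lt_of_ne fun h ↦ hpd (h ▸ dvd_mul_right 2 d)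

lemma removedDensity_primePairClasses (d : ℕ) {p : ℕ} (hp : p.Prime) :
    removedDensity (primePairClasses d) p = twoPowCardFactorsDiv (2 * d) p := by
  rw [removedDensity, card_primePairClasses, twoPowCardFactorsDiv_prime _ hp]
  split_ifs <;> simp

lemma natCast_notMem_primePairClasses {d n p : ℕ} (hn : n.Prime) (hnd : (n + d).Prime)
    (hp : p.Prime) (hpn : p < n) : (n : ZMod p) ∉ primePairClasses d p := by
  have hne {l : ℕ} (hl : l.Prime) (hpl : p < l) : (l : ZMod p) ≠ 0 := by
    rw [Ne, ZMod.natCast_eq_zero_iff, Nat.prime_dvd_prime_iff_eq hp hl]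
    exact hpl.ne
  unfold primePairClasses
  split_ifs
  · exact notMem_empty _
  · rw [mem_insert, mem_singleton, eq_neg_iff_add_eq_zero, ← Nat.cast_add, not_or]
    exact ⟨hne hn hpn, hne hnd (by lia)⟩

lemma sq_log_div_le_selbergSum_primePairClasses {d : ℕ} (hd : d ≠ 0) (K : ℕ) :
    (Real.log (K + 1) / (2 * d)) ^ 2 ≤
      selbergSum (removedDensity (primePairClasses d)) ((2 * d * K) ^ 2) := by
  set f := twoPowCardFactorsDiv (2 * d)
  have hf₁ (p : ℕ) (hp : p.Prime) : f p < 1 := by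
    rw [← removedDensity_primePairClasses d hp]
    exact removedDensity_lt_one (card_primePairClasses_lt d hp)
  rw [selbergSum_congr fun p hp ↦ removedDensity_primePairClasses d hp]
  calc (Real.log (K + 1) / (2 * d)) ^ 2
      ≤ (∑ a ∈ Icc 1 (2 * d * K) with a.Coprime (2 * d), (a : ℝ)⁻¹) ^ 2 := by
        gcongr
        · exact div_nonneg (Real.log_nonneg (by simp)) (by positivity)
        · exact_mod_cast log_div_le_sum_coprime_inv (m := 2 * d) (by simpa using hd) K
    _ ≤ ∑ n ∈ Icc 1 ((2 * d * K) ^ 2), f n :=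
        sq_sum_coprime_inv_le_sum_twoPowCardFactorsDiv (2 * d) (2 * d * K)
    _ ≤ selbergSum f ((2 * d * K) ^ 2) :=
        sum_Icc_le_selbergSum (twoPowCardFactorsDiv_nonneg (2 * d)) hf₁ _

lemma card_primePairs_le {d : ℕ} (hd : d ≠ 0) {K : ℕ} (hK : K ≠ 0) (N : ℕ) :
    (#{n ∈ range N | n.Prime ∧ (n + d).Prime} : ℝ) ≤
      N / (Real.log (K + 1) / (2 * d)) ^ 2 + 3 * (2 * d * K : ℝ) ^ 12 := by
  set z := (2 * d * K) ^ 2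
  have hz : 1 ≤ z := Nat.one_le_iff_ne_zero.2 (by positivity)
  have hlog : 0 < Real.log (K + 1) := Real.log_pos (by simpa using Nat.pos_of_ne_zero hK)
  set P : Finset ℕ := {n ∈ range N | n.Prime ∧ (n + d).Prime}
  have hsmall : #{n ∈ P | n ≤ z} ≤ z + 1 := by
    rw [← card_range (z + 1)]
    exact card_le_card fun n hn ↦ mem_range_succ_iff.2 (mem_filter.1 hn).2
  have hlarge : (#{n ∈ P | ¬n ≤ z} : ℝ) ≤
      N / selbergSum (removedDensity (primePairClasses d)) z + (z : ℝ) ^ 6 := by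
    refine card_sifted_le (fun p hp ↦ card_primePairClasses_lt d hp) hz
      ((filter_subset _ _).trans (filter_subset _ _)) fun n hn p hp hpz ↦ ?_
    obtain ⟨hnP, hzn⟩ := mem_filter.1 hn
    obtain ⟨-, hn, hnd⟩ := mem_filter.1 hnP
    exact natCast_notMem_primePairClasses hn hnd hp (hpz.trans_lt (not_le.1 hzn))
  have hz₁ : (z : ℝ) + 1 ≤ 2 * (z : ℝ) ^ 6 := by
    have hz' : (1 : ℝ) ≤ z := by exact_mod_cast hz
    linarith [le_self_pow₀ hz' (n := 6) (by norm_num), one_le_pow₀ hz' (n := 6)]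
  calc (#P : ℝ) = #{n ∈ P | n ≤ z} + #{n ∈ P | ¬n ≤ z} := by
        exact_mod_cast (card_filter_add_card_filter_not _).symm
    _ ≤ (z + 1) + (N / selbergSum (removedDensity (primePairClasses d)) z + (z : ℝ) ^ 6) :=
        add_le_add (by exact_mod_cast hsmall) hlarge
    _ ≤ N / selbergSum (removedDensity (primePairClasses d)) z + 3 * (z : ℝ) ^ 6 := by linarith
    _ ≤ N / (Real.log (K + 1) / (2 * d)) ^ 2 + 3 * (z : ℝ) ^ 6 := by
        gcongr
        exact sq_log_div_le_selbergSum_primePairClasses hd K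
    _ = N / (Real.log (K + 1) / (2 * d)) ^ 2 + 3 * (2 * d * K : ℝ) ^ 12 := by
        simp only [z, Nat.cast_pow, Nat.cast_mul, Nat.cast_ofNat, ← pow_mul]

end PrimePairs

section PrimeCounting

lemma rpow_half_isBigO_div_log_sq :
    (fun x : ℝ ↦ x ^ (1 / 2 : ℝ)) =O[atTop] fun x ↦ x / Real.log x ^ 2 := by
  refine IsBigO.of_bound 1 ?_
  have hlog := (isLittleO_log_rpow_atTop (r := 1 / 4) (by norm_num)).bound one_pos
  filter_upwards [hlog, eventually_gt_atTop 1] with x hlogx hx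
  have hlog₀ : 0 < Real.log x := Real.log_pos hx
  have hsq : Real.log x ^ 2 ≤ x ^ (1 / 2 : ℝ) := by
    rw [one_mul, Real.norm_of_nonneg hlog₀.le, Real.norm_of_nonneg (by positivity)] at hlogx
    calc Real.log x ^ 2 ≤ (x ^ (1 / 4 : ℝ)) ^ 2 := by gcongr
      _ = x ^ (1 / 2 : ℝ) := by
          rw [← Real.rpow_natCast, ← Real.rpow_mul (by positivity)]
          norm_num
  rw [one_mul, Real.norm_of_nonneg (by positivity), Real.norm_of_nonneg (by positivity),
    le_div_iff₀ (by positivity)]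
  calc x ^ (1 / 2 : ℝ) * Real.log x ^ 2 ≤ x ^ (1 / 2 : ℝ) * x ^ (1 / 2 : ℝ) := by gcongr
    _ = x := by
        rw [← Real.rpow_add (by positivity)]
        norm_num

lemma primePidR_le {d : ℕ} (hd : d ≠ 0) {x : ℝ} (hx : 1 < x) :
    (primePidR d x : ℝ) ≤
      2 * (48 * d) ^ 2 * (x / Real.log x ^ 2) + 3 * (2 * d) ^ 12 * x ^ (1 / 2 : ℝ) := by
  set y := x ^ (1 / 24 : ℝ)
  have hy : 1 ≤ y := Real.one_le_rpow hx.le (by norm_num)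
  have hK : ⌊y⌋₊ ≠ 0 := (Nat.floor_pos.2 hy).ne'
  have hpow : y ^ 12 = x ^ (1 / 2 : ℝ) := by
    rw [← Real.rpow_natCast, ← Real.rpow_mul (by positivity)]
    norm_num
  have hlog₀ : 0 < Real.log x := Real.log_pos hx
  have hlog : Real.log x / 24 ≤ Real.log (⌊y⌋₊ + 1) :=
    calc Real.log x / 24 = Real.log y := by
          rw [Real.log_rpow (by positivity)]
          ring
      _ ≤ Real.log (⌊y⌋₊ + 1) := Real.log_le_log (by positivity) (Nat.lt_floor_add_one y).le
  have hfloor : ((⌊x⌋₊ + 1 : ℕ) : ℝ) ≤ 2 * x := by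
    push_cast
    linarith [Nat.floor_le (zero_le_one.trans hx.le)]
  calc (primePidR d x : ℝ)
      ≤ (⌊x⌋₊ + 1 : ℕ) / (Real.log (⌊y⌋₊ + 1) / (2 * d)) ^ 2 + 3 * (2 * d * ⌊y⌋₊ : ℝ) ^ 12 :=
        card_primePairs_le hd hK (⌊x⌋₊ + 1)
    _ ≤ 2 * x / (Real.log x / 24 / (2 * d)) ^ 2 + 3 * (2 * d * y) ^ 12 := by
        gcongr
        exact Nat.floor_le (by positivity)
    _ = 2 * (48 * d) ^ 2 * (x / Real.log x ^ 2) + 3 * (2 * d) ^ 12 * x ^ (1 / 2 : ℝ) := by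
        rw [mul_pow _ y, hpow]
        field_simp
        ring

theorem primePidR_isBigO_div_log_sq {d : ℕ} (hd : d ≠ 0) :
    (fun x ↦ (primePidR d x : ℝ)) =O[atTop] fun x ↦ x / Real.log x ^ 2 := by
  have hbound : (fun x ↦ (primePidR d x : ℝ)) =O[atTop] fun x ↦
      2 * (48 * d) ^ 2 * (x / Real.log x ^ 2) + 3 * (2 * d) ^ 12 * x ^ (1 / 2 : ℝ) := by
    refine IsBigO.of_bound' ?_
    filter_upwards [eventually_gt_atTop 1] with x hx
    rw [Real.norm_natCast]
    exact (primePidR_le hd hx).trans (Real.le_norm_self _)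
  exact hbound.trans
    (((isBigO_refl _ _).const_mul_left _).add (rpow_half_isBigO_div_log_sq.const_mul_left _))

lemma primePiR_eq_primeCounting (x : ℝ) : primePiR x = ⌊x⌋₊.primeCounting := by
  rw [primePiR, Nat.primeCounting, Nat.primeCounting', Nat.count_eq_card_filter_range]

theorem div_log_isBigO_primePiR :
    (fun x ↦ x / Real.log x) =O[atTop] fun x ↦ (primePiR x : ℝ) := by
  refine IsBigO.of_bound 4 ?_
  have hlog := (tendsto_atTop_add_const_right atTop (2 : ℝ) tendsto_id).eventually
    (Real.isLittleO_log_id_atTop.bound (show (0 : ℝ) < 1 / 16 by norm_num))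
  filter_upwards [hlog, eventually_gt_atTop 100] with x hlogx hx
  have hlog₀ : 0 < Real.log x := Real.log_pos (by linarith)
  have hlog₂ : Real.log (x + 2) ≤ 1 / 16 * (x + 2) := by
    simpa [abs_of_pos (show 0 < x + 2 by linarith)] using (le_abs_self _).trans hlogx
  rw [Real.norm_natCast, Real.norm_of_nonneg (by positivity), primePiR_eq_primeCounting]
  calc x / Real.log x = 4 * ((x / 4) / Real.log x) := by ring
    _ ≤ 4 * (((x - 1) * Real.log 2 - Real.log (x + 2)) / Real.log x) := by
        gcongr
        nlinarith [Real.log_two_gt_d9]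
    _ ≤ 4 * ⌊x⌋₊.primeCounting := by
        gcongr
        exact Chebyshev.pi_ge' (by linarith)

lemma div_log_sq_isLittleO_div_log :
    (fun x : ℝ ↦ x / Real.log x ^ 2) =o[atTop] fun x ↦ x / Real.log x := by
  have hinv : (fun x ↦ (Real.log x)⁻¹) =o[atTop] fun _ ↦ (1 : ℝ) :=
    (isLittleO_one_iff ℝ).2 (tendsto_inv_atTop_zero.comp Real.tendsto_log_atTop)
  simpa only [mul_one, div_mul_eq_mul_div, ← div_eq_mul_inv, div_div, ← sq] using
    (isBigO_refl (fun x : ℝ ↦ x / Real.log x) atTop).mul_isLittleO hinv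

end PrimeCounting

theorem pid_over_pi_tendsto_zero (d : ℕ) (hd : 1 ≤ d) :
    Tendsto (fun x : ℝ => (primePidR d x : ℝ) / (primePiR x : ℝ)) atTop (nhds 0) := by
  have hpairs := primePidR_isBigO_div_log_sq (Nat.one_le_iff_ne_zero.1 hd)
  have hlittle : (fun x ↦ (primePidR d x : ℝ)) =o[atTop] fun x ↦ (primePiR x : ℝ) :=
    (hpairs.trans_isLittleO div_log_sq_isLittleO_div_log).trans_isBigO div_log_isBigO_primePiR
  exact hlittle.tendsto_div_nhds_zero
end

section
/- Let A_n = [a_n, b_n] be a sequence of compact intervals in ℝ with b_n − a_n → ∞ and such that 0 ∈ A_n for all n. Then the counting autocorrelation of ℙ with respect to (A_n) exists and equals δ_0, i.e., writing F_n = ℙ ∩ A_n, for every continuous compactly supported f : ℝ → ℂ one has (1/card F_n)·Σ_{x,y∈F_n} f(x−y) → f(0) as n → ∞ (the expression being interpreted as 0 when F_n = ∅). -/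
open Filter Topology Set

/-- The set of prime numbers together with their negatives, as a subset of `ℝ`. -/
def PrimesR : Set ℝ := {x | ∃ p : ℕ, p.Prime ∧ (x = (p : ℝ) ∨ x = -(p : ℝ))}

/-- The (counting-normalised) autocorrelation sum of the finite sample `F` applied to a
test function `f`; interpreted as `0` when `F = ∅` (since then `(F.ncard : ℂ)⁻¹ = 0`). -/
noncomputable def autoCorr (F : Set ℝ) (f : ℝ → ℂ) : ℂ :=
  ((F.ncard : ℂ))⁻¹ * ∑ᶠ x ∈ F, ∑ᶠ y ∈ F, f (x - y)

/-!
The points of `PrimesR` are the primes of `ℤ`, so for a finite sample `G` of them the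
autocorrelation is the finite sum, over the integers `d` with `f d ≠ 0`, of `f d` times the
proportion of `y ∈ G` with `y + d ∈ G`. This proportion is `1` for `d = 0`, and it remains to see
that for fixed `d ≠ 0` it tends to `0`. If `M` is the largest absolute value of an integer in the
interval, then `G` has at least `π(M) ≫ M / log M` elements since `0` lies in the interval.
On the other hand Brun's pure sieve (Bonferroni's inequalities truncated at level `2 k`, applied to
the two residue classes `0` and `-d` modulo each small prime not dividing `d`) shows that
`y` and `y + d` are both prime for only `O(M / (log M) ^ (6 / 5))` of the `y ∈ [-M, M]`. The
exponent exceeds `1` because the sieve saves a factor `exp (-2 ∑ 1 / p)` with two classes per prime,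
and `∑ 1 / p` may be taken to be `(3 / 5) log log M`.
-/

open Real Asymptotics
open scoped Finset

section BrunSieve

variable {α ι : Type*}

lemma sum_powerset_card_le_neg_one_pow (A : Finset ι) (m : ℕ) :
    ∑ D ∈ A.powerset with #D ≤ m, (-1 : ℤ) ^ #D =
      ∑ i ∈ Finset.range (m + 1), (-1) ^ i * ((#A).choose i : ℤ) := by
  have card_mem_range : ∀ D ∈ A.powerset.filter (#· ≤ m), #D ∈ Finset.range (m + 1) :=
    fun D hD => Finset.mem_range_succ_iff.2 (Finset.mem_filter.1 hD).2
  rw [← Finset.sum_fiberwise_of_maps_to card_mem_range]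
  refine Finset.sum_congr rfl fun i hi => ?_
  have fiber_eq : {D ∈ A.powerset.filter (#· ≤ m) | #D = i} = A.powersetCard i := by
    ext D
    grind
  rw [fiber_eq, Finset.sum_congr rfl fun D hD => by rw [(Finset.mem_powersetCard.1 hD).2],
    Finset.sum_const, Finset.card_powersetCard, nsmul_eq_mul, mul_comm]

lemma ite_eq_empty_le_sum_powerset_neg_one_pow [DecidableEq ι] (A : Finset ι) (k : ℕ) :
    (if A = ∅ then 1 else 0 : ℤ) ≤ ∑ D ∈ A.powerset with #D ≤ 2 * k, (-1 : ℤ) ^ #D := by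
  rw [sum_powerset_card_le_neg_one_pow]
  rcases A.eq_empty_or_nonempty with rfl | hA
  · simp [Finset.sum_range_succ']
  · obtain ⟨n, hn⟩ := Nat.exists_eq_add_one.2 hA.card_pos
    rw [if_neg hA.ne_empty, hn, Int.alternating_sum_range_choose_eq_choose,
      (even_two_mul k).neg_one_pow]
    positivity

lemma card_filter_forall_not_le_sum (S : Finset α) (P : Finset ι)
    (r : α → ι → Prop) [∀ a i, Decidable (r a i)] (k : ℕ) :
    (#{a ∈ S | ∀ i ∈ P, ¬ r a i} : ℤ) ≤
      ∑ D ∈ P.powerset with #D ≤ 2 * k, (-1) ^ #D * (#{a ∈ S | ∀ i ∈ D, r a i} : ℤ) := by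
  classical
  calc (#{a ∈ S | ∀ i ∈ P, ¬ r a i} : ℤ)
      = ∑ a ∈ S, if P.filter (r a) = ∅ then 1 else 0 := by
        simp only [Finset.card_filter, Finset.filter_eq_empty_iff, Nat.cast_sum, Nat.cast_ite,
          Nat.cast_one, Nat.cast_zero]
    _ ≤ ∑ a ∈ S, ∑ D ∈ (P.filter (r a)).powerset with #D ≤ 2 * k, (-1) ^ #D :=
        Finset.sum_le_sum fun a _ => ite_eq_empty_le_sum_powerset_neg_one_pow _ k
    _ = ∑ a ∈ S, ∑ D ∈ P.powerset with #D ≤ 2 * k, if ∀ i ∈ D, r a i then (-1) ^ #D else 0 := by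
        refine Finset.sum_congr rfl fun a _ => ?_
        rw [← Finset.sum_filter]
        refine Finset.sum_congr ?_ fun _ _ => rfl
        ext D
        grind
    _ = ∑ D ∈ P.powerset with #D ≤ 2 * k, (-1) ^ #D * (#{a ∈ S | ∀ i ∈ D, r a i} : ℤ) := by
        rw [Finset.sum_comm]
        refine Finset.sum_congr rfl fun D _ => ?_
        rw [← Finset.sum_filter, Finset.sum_const, nsmul_eq_mul, mul_comm]

-- Rankin's trick: weight each `D` by `exp (#D - m)`, which is at least `1` on the tail.
lemma sum_powerset_lt_card_prod_le {ν : ι → ℝ} (hν : ∀ i, 0 ≤ ν i) (P : Finset ι) (m : ℕ) :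
    ∑ D ∈ P.powerset with m < #D, ∏ i ∈ D, ν i ≤ exp (exp 1 * ∑ i ∈ P, ν i - m) := by
  have weighted_nonneg (i : ι) : 0 ≤ exp 1 * ν i := mul_nonneg (exp_pos 1).le (hν i)
  calc ∑ D ∈ P.powerset with m < #D, ∏ i ∈ D, ν i
      ≤ ∑ D ∈ P.powerset with m < #D, exp (-m) * ∏ i ∈ D, (exp 1 * ν i) := by
        refine Finset.sum_le_sum fun D hD => ?_
        have hmD : (m : ℝ) ≤ #D := mod_cast (Finset.mem_filter.1 hD).2.le
        rw [Finset.prod_mul_distrib, Finset.prod_const, exp_one_pow, ← mul_assoc, ← exp_add]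
        exact le_mul_of_one_le_left (Finset.prod_nonneg fun i _ => hν i)
          (one_le_exp (by linarith))
    _ ≤ ∑ D ∈ P.powerset, exp (-m) * ∏ i ∈ D, (exp 1 * ν i) :=
        Finset.sum_le_sum_of_subset_of_nonneg (Finset.filter_subset _ _) fun D _ _ =>
          mul_nonneg (exp_pos _).le (Finset.prod_nonneg fun i _ => weighted_nonneg i)
    _ = exp (-m) * ∏ i ∈ P, (1 + exp 1 * ν i) := by rw [Finset.prod_one_add, Finset.mul_sum]
    _ ≤ exp (-m) * exp (∑ i ∈ P, exp 1 * ν i) := by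
        gcongr
        exact prod_one_add_le_exp_sum P weighted_nonneg
    _ = exp (exp 1 * ∑ i ∈ P, ν i - m) := by
        rw [← exp_add, ← Finset.mul_sum, neg_add_eq_sub]

lemma prod_one_sub_le_exp_neg_sum {ν : ι → ℝ} {P : Finset ι} (hν : ∀ i ∈ P, ν i ≤ 1) :
    ∏ i ∈ P, (1 - ν i) ≤ exp (-∑ i ∈ P, ν i) := by
  rw [← Finset.sum_neg_distrib, exp_sum]
  exact Finset.prod_le_prod (fun i hi => sub_nonneg.2 (hν i hi)) fun i _ => one_sub_le_exp_neg _

lemma sum_powerset_card_le_neg_one_pow_mul_prod_le {ν : ι → ℝ} (hν : ∀ i, 0 ≤ ν i) {P : Finset ι}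
    (hν_le : ∀ i ∈ P, ν i ≤ 1) (m : ℕ) :
    ∑ D ∈ P.powerset with #D ≤ m, (-1) ^ #D * ∏ i ∈ D, ν i ≤
      exp (-∑ i ∈ P, ν i) + exp (exp 1 * ∑ i ∈ P, ν i - m) := by
  have full_sum : ∑ D ∈ P.powerset, (-1) ^ #D * ∏ i ∈ D, ν i = ∏ i ∈ P, (1 - ν i) := by
    simp only [sub_eq_add_neg, Finset.prod_one_add, Finset.prod_neg]
  have neg_tail_le : -∑ D ∈ P.powerset with ¬ #D ≤ m, (-1) ^ #D * ∏ i ∈ D, ν i ≤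
      ∑ D ∈ P.powerset with m < #D, ∏ i ∈ D, ν i := by
    simp only [not_le, ← Finset.sum_neg_distrib]
    refine Finset.sum_le_sum fun D _ => (neg_le_abs _).trans_eq ?_
    rw [abs_mul, abs_pow, abs_neg, abs_one, one_pow, one_mul,
      abs_of_nonneg (Finset.prod_nonneg fun i _ => hν i)]
  have split := Finset.sum_filter_add_sum_filter_not P.powerset (#· ≤ m)
    fun D => (-1) ^ #D * ∏ i ∈ D, ν i
  linarith [sum_powerset_lt_card_prod_le hν P m, prod_one_sub_le_exp_neg_sum hν_le]

lemma sum_powerset_card_le_pow_card_le {c Z : ℝ} (hc : 0 ≤ c) (hZ : 1 ≤ Z) {P : Finset ι}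
    (hPZ : (#P : ℝ) ≤ Z) (m : ℕ) :
    ∑ D ∈ P.powerset with #D ≤ m, c ^ #D ≤ exp c * Z ^ m := by
  have hZ_pos : 0 < Z := by linarith
  calc ∑ D ∈ P.powerset with #D ≤ m, c ^ #D
      ≤ ∑ D ∈ P.powerset with #D ≤ m, Z ^ m * ∏ _i ∈ D, c / Z := by
        refine Finset.sum_le_sum fun D hD => ?_
        rw [Finset.prod_const, div_pow, mul_div_assoc', le_div_iff₀ (by positivity), mul_comm]
        gcongr
        exact (Finset.mem_filter.1 hD).2
    _ ≤ ∑ D ∈ P.powerset, Z ^ m * ∏ _i ∈ D, c / Z :=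
        Finset.sum_le_sum_of_subset_of_nonneg (Finset.filter_subset _ _) fun D _ _ => by positivity
    _ = Z ^ m * ∏ _i ∈ P, (1 + c / Z) := by rw [Finset.prod_one_add, Finset.mul_sum]
    _ ≤ Z ^ m * exp (∑ _i ∈ P, c / Z) := by
        gcongr
        exact prod_one_add_le_exp_sum P fun _ => by positivity
    _ ≤ exp c * Z ^ m := by
        rw [mul_comm, Finset.sum_const, nsmul_eq_mul]
        gcongr
        rw [mul_div_assoc', div_le_iff₀ hZ_pos, mul_comm]
        gcongr

theorem card_sifted_le_s2 {S : Finset α} {P : Finset ι} {r : α → ι → Prop}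
    [∀ a i, Decidable (r a i)] {ν : ι → ℝ} {X c Z : ℝ} (hν : ∀ i, 0 ≤ ν i)
    (hν_le : ∀ i ∈ P, ν i ≤ 1) (hX : 0 ≤ X) (hc : 0 ≤ c) (hZ : 1 ≤ Z) (hPZ : (#P : ℝ) ≤ Z)
    (hcount : ∀ D ⊆ P, |(#{a ∈ S | ∀ i ∈ D, r a i} : ℝ) - X * ∏ i ∈ D, ν i| ≤ c ^ #D) (k : ℕ) :
    (#{a ∈ S | ∀ i ∈ P, ¬ r a i} : ℝ) ≤
      X * (exp (-∑ i ∈ P, ν i) + exp (exp 1 * ∑ i ∈ P, ν i - 2 * k)) + exp c * Z ^ (2 * k) := by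
  have signed_count_le (D : Finset ι) (hD : D ⊆ P) :
      (-1) ^ #D * (#{a ∈ S | ∀ i ∈ D, r a i} : ℝ) ≤
        X * ((-1) ^ #D * ∏ i ∈ D, ν i) + c ^ #D := by
    have signed_error : (-1) ^ #D * ((#{a ∈ S | ∀ i ∈ D, r a i} : ℝ) - X * ∏ i ∈ D, ν i) ≤
        c ^ #D := by
      refine (le_abs_self _).trans ?_
      rw [abs_mul, abs_pow, abs_neg, abs_one, one_pow, one_mul]
      exact hcount D hD
    linarith
  calc (#{a ∈ S | ∀ i ∈ P, ¬ r a i} : ℝ)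
      ≤ ∑ D ∈ P.powerset with #D ≤ 2 * k, (-1) ^ #D * (#{a ∈ S | ∀ i ∈ D, r a i} : ℝ) := by
        exact_mod_cast card_filter_forall_not_le_sum S P r k
    _ ≤ ∑ D ∈ P.powerset with #D ≤ 2 * k, (X * ((-1) ^ #D * ∏ i ∈ D, ν i) + c ^ #D) :=
        Finset.sum_le_sum fun D hD =>
          signed_count_le D (Finset.mem_powerset.1 (Finset.mem_filter.1 hD).1)
    _ = X * ∑ D ∈ P.powerset with #D ≤ 2 * k, (-1) ^ #D * ∏ i ∈ D, ν i +
          ∑ D ∈ P.powerset with #D ≤ 2 * k, c ^ #D := by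
        rw [Finset.sum_add_distrib, Finset.mul_sum]
    _ ≤ X * (exp (-∑ i ∈ P, ν i) + exp (exp 1 * ∑ i ∈ P, ν i - 2 * k)) + exp c * Z ^ (2 * k) := by
        gcongr
        · exact_mod_cast sum_powerset_card_le_neg_one_pow_mul_prod_le hν hν_le (2 * k)
        · exact sum_powerset_card_le_pow_card_le hc hZ hPZ (2 * k)

end BrunSieve

section ResidueClasses

lemma abs_card_Ico_filter_intCast_eq_sub_le (a : ℤ) (N q : ℕ) [NeZero q] (c : ZMod q) :
    |(#{l ∈ Finset.Ico a (a + N) | ((l : ℤ) : ZMod q) = c} : ℝ) - N / q| ≤ 1 := by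
  obtain ⟨v, rfl⟩ := ZMod.intCast_surjective c
  have hq : (0 : ℚ) < q := mod_cast NeZero.pos q
  have hcard := Int.Ico_filter_modEq_card a (a + N) (r := q) (mod_cast NeZero.pos q) v
  set x : ℚ := ((a + N : ℤ) - v) / (q : ℤ) with hx
  set y : ℚ := (a - v) / (q : ℤ) with hy
  have hxy : x - y = N / q := by
    rw [hx, hy]
    push_cast
    ring
  have hyx : y ≤ x := sub_nonneg.1 (hxy ▸ by positivity)
  rw [max_eq_left (sub_nonneg.2 (Int.ceil_mono hyx))] at hcard
  have hcard_rat : (#{l ∈ Finset.Ico a (a + N) | l ≡ v [ZMOD q]} : ℚ) = ⌈x⌉ - ⌈y⌉ :=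
    mod_cast hcard
  have bound_rat : |(#{l ∈ Finset.Ico a (a + N) | l ≡ v [ZMOD q]} : ℚ) - N / q| ≤ 1 := by
    rw [hcard_rat, ← hxy, abs_le]
    constructor <;> linarith [Int.le_ceil x, Int.ceil_lt_add_one x, Int.le_ceil y,
      Int.ceil_lt_add_one y]
  simp only [ZMod.intCast_eq_intCast_iff]
  simpa using (Rat.cast_le (K := ℝ)).2 bound_rat

lemma abs_card_Ico_filter_intCast_mem_sub_le (a : ℤ) (N q : ℕ) [NeZero q]
    (C : Finset (ZMod q)) :
    |(#{l ∈ Finset.Ico a (a + N) | ((l : ℤ) : ZMod q) ∈ C} : ℝ) - N * (#C / q)| ≤ #C := by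
  have difference_eq : (#{l ∈ Finset.Ico a (a + N) | ((l : ℤ) : ZMod q) ∈ C} : ℝ) - N * (#C / q) =
      ∑ c ∈ C, ((#{l ∈ Finset.Ico a (a + N) | ((l : ℤ) : ZMod q) = c} : ℝ) - N / q) := by
    rw [← Finset.sum_card_fiberwise_eq_card_filter, Finset.sum_sub_distrib, Finset.sum_const,
      nsmul_eq_mul]
    push_cast
    ring
  rw [difference_eq, Finset.cast_card]
  exact (Finset.abs_sum_le_sum_abs _ _).trans
    (Finset.sum_le_sum fun c _ => abs_card_Ico_filter_intCast_eq_sub_le a N q c)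

lemma abs_card_Ico_filter_forall_intCast_mem_sub_le {ι : Type*} [Fintype ι] {m : ι → ℕ}
    (hm : ∀ i, m i ≠ 0) (hcop : Pairwise (Function.onFun Nat.Coprime m))
    (C : ∀ i, Finset (ZMod (m i))) (a : ℤ) (N : ℕ) :
    |(#{l ∈ Finset.Ico a (a + N) | ∀ i, ((l : ℤ) : ZMod (m i)) ∈ C i} : ℝ) -
      N * ∏ i, ((#(C i) : ℝ) / m i)| ≤ ∏ i, (#(C i) : ℝ) := by
  classical
  have : NeZero (∏ i, m i) := ⟨Finset.prod_ne_zero_iff.2 fun i _ => hm i⟩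
  let e := ZMod.prodEquivPi m hcop
  let C' : Finset (ZMod (∏ i, m i)) := (Fintype.piFinset C).map e.symm.toEquiv.toEmbedding
  have hcard : #C' = ∏ i, #(C i) := by rw [Finset.card_map, Fintype.card_piFinset]
  have hmem (l : ℤ) : (l : ZMod (∏ i, m i)) ∈ C' ↔ ∀ i, (l : ZMod (m i)) ∈ C i := by
    simp [C', e, Finset.mem_map_equiv]
  have h := abs_card_Ico_filter_intCast_mem_sub_le a N _ C'
  simp only [hmem, hcard] at h
  push_cast at h
  rwa [← Finset.prod_div_distrib] at h

end ResidueClasses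

section PrimeReciprocals

lemma log_le_prod_primesBelow_one_sub_inv (N : ℕ) :
    log N ≤ ∏ p ∈ N.primesBelow, (1 - (p : ℝ)⁻¹)⁻¹ := by
  rcases N.eq_zero_or_pos with rfl | hN
  · simp
  let f : ℕ →* ℝ := ⟨⟨fun n => (n : ℝ)⁻¹, by simp⟩, fun m n => by push_cast; rw [mul_inv]⟩
  have hf {p : ℕ} (hp : p.Prime) : ‖f p‖ < 1 := by
    simpa [f] using inv_lt_one_of_one_lt₀ (mod_cast hp.one_lt : (1 : ℝ) < p)
  obtain ⟨-, hsum⟩ :=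
    EulerProduct.summable_and_hasSum_smoothNumbers_prod_primesBelow_geometric hf N
  let e : Fin (N - 1) ↪ N.smoothNumbers :=
    ⟨fun i => ⟨i + 1, Nat.mem_smoothNumbers_of_lt (by omega) (by omega)⟩, fun i j h => by
      simpa [Fin.ext_iff] using h⟩
  calc log N ≤ harmonic (N - 1) := by
        simpa [Nat.sub_add_cancel hN] using log_add_one_le_harmonic (N - 1)
    _ = ∑ n ∈ Finset.univ.map e, f n := by
        rw [Finset.sum_map, harmonic, Finset.sum_range]
        push_cast
        exact Finset.sum_congr rfl fun i _ => congrArg _ (Nat.cast_succ (i : ℕ)).symm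
    _ ≤ ∏ p ∈ N.primesBelow, (1 - (p : ℝ)⁻¹)⁻¹ :=
        sum_le_hasSum _ (fun n _ => inv_nonneg.2 (Nat.cast_nonneg _)) hsum

lemma inv_one_sub_inv_le_exp {x : ℝ} (hx : 2 ≤ x) :
    (1 - x⁻¹)⁻¹ ≤ exp (1 / x + 2 * (x ^ 2)⁻¹) := by
  have hx_pred : 0 < x - 1 := by linarith
  have inv_eq : (1 - x⁻¹)⁻¹ = 1 / (x - 1) + 1 := by
    have : x ≠ 0 := by linarith
    field_simp
    ring
  have inv_pred_le : 1 / (x - 1) ≤ 1 / x + 2 * (x ^ 2)⁻¹ := by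
    have : 0 < x := by linarith
    rw [div_le_iff₀ hx_pred]
    field_simp
    nlinarith
  rw [inv_eq]
  exact (add_one_le_exp _).trans (exp_le_exp.2 inv_pred_le)

lemma sum_primesBelow_inv_sq_le (N : ℕ) : ∑ p ∈ N.primesBelow, ((p : ℝ) ^ 2)⁻¹ ≤ 1 :=
  calc ∑ p ∈ N.primesBelow, ((p : ℝ) ^ 2)⁻¹ ≤ ∑ n ∈ Finset.Ioo 1 N, ((n : ℝ) ^ 2)⁻¹ := by
        rw [Nat.primesBelow_eq_filter_Ioo_one]
        exact Finset.sum_le_sum_of_subset_of_nonneg (Finset.filter_subset _ _)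
          fun n _ _ => by positivity
    _ ≤ 2 / ((1 : ℕ) + 1) := sum_Ioo_inv_sq_le 1 N
    _ = 1 := by norm_num

theorem log_log_sub_two_le_sum_primesBelow_one_div {N : ℕ} (hN : 2 ≤ N) :
    log (log N) - 2 ≤ ∑ p ∈ N.primesBelow, (1 : ℝ) / p := by
  have two_le {p : ℕ} (hp : p ∈ N.primesBelow) : (2 : ℝ) ≤ p :=
    mod_cast Nat.two_le_of_mem_primesBelow hp
  have log_le : log N ≤ exp (∑ p ∈ N.primesBelow, (1 : ℝ) / p + 2) := by
    calc log N ≤ ∏ p ∈ N.primesBelow, (1 - (p : ℝ)⁻¹)⁻¹ := log_le_prod_primesBelow_one_sub_inv N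
      _ ≤ ∏ p ∈ N.primesBelow, exp (1 / p + 2 * ((p : ℝ) ^ 2)⁻¹) := by
          refine Finset.prod_le_prod (fun p hp => ?_) fun p hp => inv_one_sub_inv_le_exp (two_le hp)
          exact inv_nonneg.2 (sub_nonneg.2 (inv_le_one_of_one_le₀ (by linarith [two_le hp])))
      _ ≤ exp (∑ p ∈ N.primesBelow, (1 : ℝ) / p + 2) := by
          rw [← exp_sum, Finset.sum_add_distrib, ← Finset.mul_sum]
          gcongr
          linarith [sum_primesBelow_inv_sq_le N]
  have log_pos : 0 < log N := Real.log_pos (mod_cast hN)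
  linarith [(log_le_iff_le_exp log_pos).2 log_le]

lemma sum_filter_dvd_one_div_le {n : ℕ} (hn : n ≠ 0) (P : Finset ℕ) :
    ∑ p ∈ P with p ∣ n, (1 : ℝ) / p ≤ n := by
  have filter_subset : {p ∈ P | p ∣ n} ⊆ n.divisors := fun p hp =>
    Nat.mem_divisors.2 ⟨(Finset.mem_filter.1 hp).2, hn⟩
  calc ∑ p ∈ P with p ∣ n, (1 : ℝ) / p ≤ ∑ p ∈ P with p ∣ n, (1 : ℝ) :=
        Finset.sum_le_sum fun p _ => by simpa using Nat.cast_inv_le_one p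
    _ = #{p ∈ P | p ∣ n} := by simp
    _ ≤ n := mod_cast (Finset.card_le_card filter_subset).trans (Nat.card_divisors_le_self n)

lemma exists_subset_le_sum_le_add {ι R : Type*} [AddCommGroup R] [LinearOrder R]
    [IsOrderedAddMonoid R] {w : ι → R} {c T : R} (hT : 0 ≤ T) (hc : 0 ≤ c) {s : Finset ι}
    (hw : ∀ i ∈ s, w i ≤ c) (hs : T ≤ ∑ i ∈ s, w i) :
    ∃ t ⊆ s, T ≤ ∑ i ∈ t, w i ∧ ∑ i ∈ t, w i ≤ T + c := by
  induction s using Finset.cons_induction with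
  | empty => exact ⟨∅, subset_rfl, hs, by simpa using add_nonneg hT hc⟩
  | cons i s hi ih =>
    by_cases hTs : T ≤ ∑ j ∈ s, w j
    · obtain ⟨t, hts, ht⟩ := ih (fun j hj => hw j (Finset.mem_cons_of_mem hj)) hTs
      exact ⟨t, hts.trans (Finset.subset_cons hi), ht⟩
    · refine ⟨_, subset_rfl, hs, ?_⟩
      rw [Finset.sum_cons, add_comm]
      exact add_le_add (not_le.1 hTs).le (hw i (Finset.mem_cons_self i s))

end PrimeReciprocals

section PrimePairs

/-- The `l ∈ [a, a + N)` for which `l` and `l + d` are both prime in `ℤ`, that is, prime numbers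
up to sign. -/
noncomputable def primePairs (d a : ℤ) (N : ℕ) : Finset ℤ :=
  {l ∈ Finset.Ico a (a + N) | Prime l ∧ Prime (l + d)}

lemma abs_card_Ico_filter_forall_dvd_mul_add_sub_le {d : ℤ} {D : Finset ℕ}
    (hD : ∀ p ∈ D, p.Prime) (hDd : ∀ p ∈ D, ¬ p ∣ d.natAbs) (a : ℤ) (N : ℕ) :
    |(#{l ∈ Finset.Ico a (a + N) | ∀ p ∈ D, ((p : ℕ) : ℤ) ∣ l * (l + d)} : ℝ) -
      N * ∏ p ∈ D, (2 : ℝ) / p| ≤ 2 ^ #D := by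
  have prime (p : D) : (p : ℕ).Prime := hD p p.2
  have pairwise_coprime : Pairwise (Function.onFun Nat.Coprime fun p : D => (p : ℕ)) :=
    fun p q hpq => (Nat.coprime_primes (prime p) (prime q)).2 (Subtype.coe_injective.ne hpq)
  let roots (p : D) : Finset (ZMod p) := {0, -(d : ZMod p)}
  have card_roots (p : D) : #(roots p) = 2 := by
    refine Finset.card_pair fun h => hDd p p.2 ?_
    rwa [eq_comm, neg_eq_zero, ZMod.intCast_zmod_eq_zero_iff_dvd, Int.natCast_dvd] at h
  have mem_roots (l : ℤ) (p : D) :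
      (l : ZMod p) ∈ roots p ↔ ((p : ℕ) : ℤ) ∣ l * (l + d) := by
    have : Fact (p : ℕ).Prime := ⟨prime p⟩
    rw [← ZMod.intCast_zmod_eq_zero_iff_dvd]
    simp [roots, eq_neg_iff_add_eq_zero]
  have h := abs_card_Ico_filter_forall_intCast_mem_sub_le (fun p => (prime p).ne_zero)
    pairwise_coprime roots a N
  simp only [card_roots, mem_roots] at h
  rw [Finset.prod_coe_sort D fun p => ((2 : ℕ) : ℝ) / p] at h
  simpa using h

lemma exists_primes_not_dvd_le_sum_one_div {n Z : ℕ} (hn : n ≠ 0) (hZ : 2 ≤ Z) {T : ℝ}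
    (hT : 0 ≤ T) (hTZ : T ≤ log (log Z) - 2 - n) :
    ∃ P ⊆ Z.primesBelow, (∀ p ∈ P, ¬ p ∣ n) ∧
      T ≤ ∑ p ∈ P, (1 : ℝ) / p ∧ ∑ p ∈ P, (1 : ℝ) / p ≤ T + 1 := by
  have sum_ge : T ≤ ∑ p ∈ Z.primesBelow with ¬ p ∣ n, (1 : ℝ) / p := by
    linarith [Finset.sum_filter_add_sum_filter_not Z.primesBelow (· ∣ n) fun p => (1 : ℝ) / p,
      sum_filter_dvd_one_div_le hn Z.primesBelow, log_log_sub_two_le_sum_primesBelow_one_div hZ]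
  obtain ⟨P, hP, hsum⟩ := exists_subset_le_sum_le_add hT zero_le_one
    (fun p _ => by simpa using Nat.cast_inv_le_one p) sum_ge
  exact ⟨P, hP.trans (Finset.filter_subset _ _), fun p hp => (Finset.mem_filter.1 (hP hp)).2, hsum⟩

lemma not_dvd_of_mem_primesBelow_of_prime {p Z : ℕ} {l : ℤ} (hp : p ∈ Z.primesBelow)
    (hl : Prime l) (hZl : Z ≤ l.natAbs) : ¬ (p : ℤ) ∣ l := by
  rw [Int.natCast_dvd, Nat.prime_dvd_prime_iff_eq (Nat.prime_of_mem_primesBelow hp)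
    (Int.prime_iff_natAbs_prime.1 hl)]
  exact ((Nat.lt_of_mem_primesBelow hp).trans_le hZl).ne

lemma primePairs_subset {P : Finset ℕ} {Z : ℕ} (hP : P ⊆ Z.primesBelow) (d a : ℤ) (N : ℕ) :
    primePairs d a N ⊆ (Finset.Ioo (-Z : ℤ) Z ∪ Finset.Ioo (-Z - d) (Z - d)) ∪
      {l ∈ Finset.Ico a (a + N) | ∀ p ∈ P, ¬ ((p : ℕ) : ℤ) ∣ l * (l + d)} := by
  intro l hl
  obtain ⟨hla, hl_prime, hld_prime⟩ := Finset.mem_filter.1 hl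
  simp only [Finset.mem_union, Finset.mem_Ioo, Finset.mem_filter]
  by_cases hZl : Z ≤ l.natAbs
  · by_cases hZld : Z ≤ (l + d).natAbs
    · refine Or.inr ⟨hla, fun p hp hdvd => ?_⟩
      have hp_prime := Nat.prime_iff_prime_int.1 (Nat.prime_of_mem_primesBelow (hP hp))
      exact (hp_prime.dvd_or_dvd hdvd).elim
        (not_dvd_of_mem_primesBelow_of_prime (hP hp) hl_prime hZl)
        (not_dvd_of_mem_primesBelow_of_prime (hP hp) hld_prime hZld)
    · omega
  · omega

theorem card_primePairs_le_s2 {d : ℤ} (hd : d ≠ 0) {Z : ℕ} (hZ : 2 ≤ Z) {T : ℝ} (hT : 0 ≤ T)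
    (hTZ : T ≤ log (log Z) - 2 - d.natAbs) (a : ℤ) (N k : ℕ) :
    (#(primePairs d a N) : ℝ) ≤
      4 * Z + (N * (exp (-(2 * T)) + exp (6 * (T + 1) - 2 * k)) + exp 2 * Z ^ (2 * k)) := by
  obtain ⟨P, hPZ, hPd, le_sum, sum_le⟩ :=
    exists_primes_not_dvd_le_sum_one_div (Int.natAbs_ne_zero.2 hd) hZ hT hTZ
  have prime {p : ℕ} (hp : p ∈ P) : p.Prime := Nat.prime_of_mem_primesBelow (hPZ hp)
  have card_P : #P ≤ Z := by
    simpa using Finset.card_le_card (hPZ.trans (Finset.filter_subset _ _))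
  have sifted := card_sifted_le_s2 (S := Finset.Ico a (a + N)) (P := P)
    (r := fun l p => (p : ℤ) ∣ l * (l + d)) (ν := fun p : ℕ => (2 : ℝ) / p) (X := N) (c := 2)
    (Z := Z) (fun p => by positivity)
    (fun p hp => div_le_one_of_le₀ (mod_cast (prime hp).two_le) (Nat.cast_nonneg p))
    (Nat.cast_nonneg N) zero_le_two (mod_cast one_le_two.trans hZ) (mod_cast card_P)
    (fun D hD => abs_card_Ico_filter_forall_dvd_mul_add_sub_le (fun p hp => prime (hD hp))
      (fun p hp => hPd p (hD hp)) a N) k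
  have sum_two_div : ∑ p ∈ P, (2 : ℝ) / p = 2 * ∑ p ∈ P, (1 : ℝ) / p := by
    rw [Finset.mul_sum]
    exact Finset.sum_congr rfl fun p _ => by ring
  rw [sum_two_div] at sifted
  have tail_exponent_le : exp 1 * (2 * ∑ p ∈ P, (1 : ℝ) / p) ≤ 6 * (T + 1) := by
    nlinarith [exp_one_lt_three, exp_pos 1]
  have card_le : #(primePairs d a N) ≤
      4 * Z + #{l ∈ Finset.Ico a (a + N) | ∀ p ∈ P, ¬ ((p : ℕ) : ℤ) ∣ l * (l + d)} := by
    refine (Finset.card_le_card (primePairs_subset hPZ d a N)).trans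
      ((Finset.card_union_le _ _).trans (Nat.add_le_add_right ?_ _))
    refine (Finset.card_union_le _ _).trans ?_
    simp only [Int.card_Ioo]
    omega
  calc (#(primePairs d a N) : ℝ)
      ≤ 4 * Z + #{l ∈ Finset.Ico a (a + N) | ∀ p ∈ P, ¬ ((p : ℕ) : ℤ) ∣ l * (l + d)} :=
        mod_cast card_le
    _ ≤ _ := by
        refine add_le_add_right (sifted.trans ?_) _
        gcongr

lemma eventually_mul_add_le_exp (A B : ℝ) {c : ℝ} (hc : 0 < c) :
    ∀ᶠ s : ℝ in atTop, A * s + B ≤ exp (c * s) := by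
  have linear : (fun s : ℝ => A * s) =o[atTop] fun s => exp (c * s) := by
    simpa using (isLittleO_pow_exp_pos_mul_atTop (k := 1) hc).const_mul_left A
  have const : (fun _ : ℝ => B) =o[atTop] fun s => exp (c * s) := by
    simpa using (isLittleO_pow_exp_pos_mul_atTop (k := 0) hc).const_mul_left B
  filter_upwards [(linear.add const).bound one_pos] with s hs
  rw [one_mul, norm_of_nonneg (exp_pos _).le] at hs
  exact (le_norm_self _).trans hs

lemma natCeil_exp_pow_le {u : ℝ} (hu : 1 ≤ u) (m : ℕ) : (⌈exp u⌉₊ : ℝ) ^ m ≤ exp (2 * m * u) := by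
  have ceil_le : (⌈exp u⌉₊ : ℝ) ≤ exp (2 * u) := by
    rw [two_mul, exp_add]
    nlinarith [Nat.ceil_lt_add_one (exp_pos u).le, add_one_le_exp u]
  calc (⌈exp u⌉₊ : ℝ) ^ m ≤ exp (2 * u) ^ m := by gcongr
    _ = exp (2 * m * u) := by
        rw [← exp_nat_mul]
        ring_nf

-- `Z ≈ exp (L ^ (7 / 10))` and `k ≈ (12 / 5) * log L`, where `L = exp s` stands for `log N`.
lemma eventually_exists_sieve_parameters (C : ℝ) :
    ∀ᶠ s : ℝ in atTop, ∃ Z k : ℕ, 2 ≤ Z ∧ 3 / 5 * s ≤ log (log Z) - 2 - C ∧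
      12 / 5 * s + 3 ≤ k ∧ (4 + exp 2) * (Z : ℝ) ^ (2 * k) ≤ exp (exp s - 6 / 5 * s) := by
  filter_upwards [eventually_mul_add_le_exp (8 * (12 / 5)) 32 (show (0 : ℝ) < 3 / 10 by norm_num),
    eventually_mul_add_le_exp (2 * (6 / 5)) 6 one_pos, eventually_ge_atTop (10 * (2 + C)),
    eventually_ge_atTop 1] with s hlevel hlinear hsC hs
  set u := exp (7 / 10 * s) with hu
  have one_le_u : 1 ≤ u := one_le_exp (by linarith)
  have le_Z : exp u ≤ (⌈exp u⌉₊ : ℝ) := Nat.le_ceil _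
  have two_le_Z : (2 : ℝ) ≤ ⌈exp u⌉₊ := by linarith [add_one_le_exp u]
  refine ⟨⌈exp u⌉₊, ⌈12 / 5 * s + 3⌉₊, mod_cast two_le_Z, ?_, Nat.le_ceil _, ?_⟩
  · have u_le : u ≤ log (⌈exp u⌉₊ : ℝ) := (le_log_iff_exp_le (by positivity)).2 le_Z
    have log_log_ge : 7 / 10 * s ≤ log (log (⌈exp u⌉₊ : ℝ)) :=
      (le_log_iff_exp_le (by linarith)).2 u_le
    linarith
  · have k_le : (⌈12 / 5 * s + 3⌉₊ : ℝ) ≤ 12 / 5 * s + 4 := by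
      linarith [Nat.ceil_lt_add_one (show 0 ≤ 12 / 5 * s + 3 by linarith)]
    have level_le : 4 * (12 / 5 * s + 4) * u ≤ exp s / 2 := by
      have exp_s : exp s = exp (3 / 10 * s) * u := by
        rw [hu, ← exp_add]
        ring_nf
      rw [exp_s]
      nlinarith
    have const_le : 4 + exp 2 ≤ exp 3 := by
      rw [show (3 : ℝ) = 2 + 1 by norm_num, exp_add]
      nlinarith [exp_one_gt_d9, add_one_le_exp (2 : ℝ)]
    calc (4 + exp 2) * (⌈exp u⌉₊ : ℝ) ^ (2 * ⌈12 / 5 * s + 3⌉₊)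
        ≤ exp 3 * exp (2 * (2 * ⌈12 / 5 * s + 3⌉₊ : ℕ) * u) := by
          gcongr
          exact natCeil_exp_pow_le one_le_u _
      _ = exp (3 + 4 * ⌈12 / 5 * s + 3⌉₊ * u) := by
          rw [← exp_add]
          push_cast
          ring_nf
      _ ≤ exp (3 + 4 * (12 / 5 * s + 4) * u) := by gcongr
      _ ≤ exp (exp s - 6 / 5 * s) := by
          rw [one_mul] at hlinear
          exact exp_le_exp.2 (by linarith)

theorem eventually_card_primePairs_le {d : ℤ} (hd : d ≠ 0) :
    ∀ᶠ N : ℕ in atTop, ∀ a, (#(primePairs d a N) : ℝ) ≤ 3 * N / log N ^ (6 / 5 : ℝ) := by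
  have tendsto_log_natCast : Tendsto (fun N : ℕ => log N) atTop atTop :=
    tendsto_log_atTop.comp tendsto_natCast_atTop_atTop
  have tendsto_log_log := tendsto_log_atTop.comp tendsto_log_natCast
  filter_upwards [tendsto_log_log.eventually (eventually_exists_sieve_parameters d.natAbs),
    tendsto_log_log.eventually_ge_atTop 0, tendsto_log_natCast.eventually_gt_atTop 0,
    eventually_gt_atTop 0] with N ⟨Z, k, hZ, hTZ, hk, hZk⟩ hs hlog hN a
  simp only [Function.comp_apply] at hTZ hk hZk hs
  set s := log (log N)
  have exp_s : exp s = log N := exp_log hlog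
  have rpow_eq : log N ^ (6 / 5 : ℝ) = exp (6 / 5 * s) := by rw [rpow_def_of_pos hlog, mul_comm]
  rw [exp_s, exp_sub, exp_log (mod_cast hN)] at hZk
  have main := card_primePairs_le_s2 hd hZ (mul_nonneg (by norm_num) hs) hTZ a N k
  have sifting_density_le : exp (-(2 * (3 / 5 * s))) + exp (6 * (3 / 5 * s + 1) - 2 * k) ≤
      2 * exp (-(6 / 5 * s)) := by
    have main_eq : exp (-(2 * (3 / 5 * s))) = exp (-(6 / 5 * s)) := by ring_nf
    have tail_le : exp (6 * (3 / 5 * s + 1) - 2 * k) ≤ exp (-(6 / 5 * s)) :=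
      exp_le_exp.2 (by linarith)
    linarith
  have Z_le_pow : (Z : ℝ) ≤ (Z : ℝ) ^ (2 * k) := by
    have k_pos : (0 : ℝ) < k := by linarith
    have k_ne : k ≠ 0 := mod_cast k_pos.ne'
    exact le_self_pow₀ (mod_cast one_le_two.trans hZ) (by omega)
  rw [rpow_eq]
  calc (#(primePairs d a N) : ℝ)
      ≤ 4 * (Z : ℝ) ^ (2 * k) + (N * (2 * exp (-(6 / 5 * s))) + exp 2 * (Z : ℝ) ^ (2 * k)) :=
        main.trans (by gcongr)
    _ = N * (2 * exp (-(6 / 5 * s))) + (4 + exp 2) * (Z : ℝ) ^ (2 * k) := by ring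
    _ ≤ N * (2 * exp (-(6 / 5 * s))) + N / exp (6 / 5 * s) := by gcongr
    _ = 3 * N / exp (6 / 5 * s) := by
        rw [exp_neg]
        ring

lemma div_log_isBigO_primeCounting :
    (fun M : ℕ => (M : ℝ) / log M) =O[atTop] fun M => (Nat.primeCounting M : ℝ) := by
  have log_succ_le : ∀ᶠ M : ℕ in atTop, log ((M : ℝ) + 1) ≤ 1 / 20 * (M + 1) := by
    have h := (isLittleO_log_id_atTop.bound (show (0 : ℝ) < 1 / 20 by norm_num)).natCast_atTop
    filter_upwards [(tendsto_add_atTop_nat 1).eventually h] with M hM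
    rw [id, norm_of_nonneg (Nat.cast_nonneg _), Nat.cast_succ] at hM
    exact (le_norm_self _).trans hM
  refine .of_bound 2 ?_
  filter_upwards [log_succ_le, eventually_ge_atTop 1] with M hlog hM
  have one_le_M : (1 : ℝ) ≤ M := mod_cast hM
  rw [norm_of_nonneg (div_nonneg (Nat.cast_nonneg M) (log_nonneg one_le_M)),
    norm_of_nonneg (Nat.cast_nonneg _)]
  calc (M : ℝ) / log M ≤ 2 * (M * log 2 - log (M + 1)) / log M := by
        gcongr
        nlinarith [log_two_gt_d9]
    _ ≤ 2 * Nat.primeCounting M := by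
        rw [mul_div_assoc]
        gcongr
        exact Chebyshev.pi_ge M

theorem card_primePairs_isLittleO_primeCounting {d : ℤ} (hd : d ≠ 0) :
    (fun M : ℕ => (#(primePairs d (-M) (2 * M + 1)) : ℝ)) =o[atTop]
      fun M => (Nat.primeCounting M : ℝ) := by
  have tendsto_log_natCast : Tendsto (fun M : ℕ => log M) atTop atTop :=
    tendsto_log_atTop.comp tendsto_natCast_atTop_atTop
  have tendsto_length : Tendsto (fun M : ℕ => 2 * M + 1) atTop atTop :=
    tendsto_atTop_mono (fun M => show M ≤ 2 * M + 1 by omega) tendsto_id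
  have pairs_isBigO : (fun M : ℕ => (#(primePairs d (-M) (2 * M + 1)) : ℝ)) =O[atTop]
      fun M : ℕ => (M : ℝ) / log M * log M ^ (-(1 / 5) : ℝ) := by
    refine .of_bound 9 ?_
    filter_upwards [tendsto_length.eventually (eventually_card_primePairs_le hd),
      tendsto_log_natCast.eventually_gt_atTop 0, eventually_ge_atTop 1] with M hpairs hlog hM
    have one_le_M : (1 : ℝ) ≤ M := mod_cast hM
    rw [norm_of_nonneg (Nat.cast_nonneg _), norm_of_nonneg (by positivity)]
    calc (#(primePairs d (-M) (2 * M + 1)) : ℝ)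
        ≤ 3 * (2 * M + 1 : ℕ) / log (2 * M + 1 : ℕ) ^ (6 / 5 : ℝ) := hpairs _
      _ ≤ 3 * (3 * M) / log M ^ (6 / 5 : ℝ) := by
          push_cast
          gcongr <;> linarith
      _ = 9 * (M / log M * log M ^ (-(1 / 5) : ℝ)) := by
          rw [show (6 / 5 : ℝ) = 1 + 1 / 5 by norm_num, rpow_add hlog, rpow_one, rpow_neg hlog.le]
          field_simp
          ring
  have rpow_isLittleO : (fun M : ℕ => log M ^ (-(1 / 5) : ℝ)) =o[atTop] fun _ => (1 : ℝ) :=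
    (isLittleO_one_iff ℝ).2
      ((tendsto_rpow_neg_atTop (by norm_num)).comp tendsto_log_natCast)
  have factor_isLittleO := div_log_isBigO_primeCounting.mul_isLittleO rpow_isLittleO
  simpa only [mul_one] using pairs_isBigO.trans_isLittleO factor_isLittleO

end PrimePairs

section Autocorrelation

variable {ι : Type*} {l : Filter ι} {f : ℝ → ℂ}

lemma autoCorr_image_intCast (G : Finset ℤ) {E : Finset ℤ} (hE : ∀ d : ℤ, f d ≠ 0 → d ∈ E) :
    autoCorr ((fun y : ℤ => (y : ℝ)) '' G) f =
      ∑ d ∈ E, f d * ((#{y ∈ G | y + d ∈ G} : ℂ) / #G) := by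
  have inner_sum (y : ℤ) :
      ∑ x ∈ G, f (x - y : ℤ) = ∑ d ∈ E, if y + d ∈ G then f d else 0 := by
    rw [← Finset.sum_filter, ← Finset.sum_filter_of_ne (s := G) (p := fun x => x - y ∈ E)
      fun x _ => hE _]
    refine Finset.sum_nbij' (· - y) (y + ·) ?_ ?_ ?_ ?_ ?_ <;> simp +contextual
  have double_sum : ∑ x ∈ G, ∑ y ∈ G, f (x - y : ℤ) =
      ∑ d ∈ E, (#{y ∈ G | y + d ∈ G} : ℂ) * f d := by
    rw [Finset.sum_comm, Finset.sum_congr rfl fun y _ => inner_sum y, Finset.sum_comm]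
    exact Finset.sum_congr rfl fun d _ => by
      rw [← Finset.sum_filter, Finset.sum_const, nsmul_eq_mul]
  rw [autoCorr, ncard_image_of_injective _ Int.cast_injective, ncard_coe_finset,
    finsum_mem_image Int.cast_injective.injOn, finsum_mem_coe_finset]
  simp only [finsum_mem_image Int.cast_injective.injOn, finsum_mem_coe_finset, ← Int.cast_sub]
  rw [double_sum, Finset.mul_sum]
  exact Finset.sum_congr rfl fun d _ => by ring

lemma finite_intCast_ne_zero_of_hasCompactSupport {E : Type*} [Zero E] {g : ℝ → E}
    (hg : HasCompactSupport g) : {d : ℤ | g d ≠ 0}.Finite :=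
  (Int.isClosedEmbedding_coe_real.isCompact_preimage hg.isCompact).finite_of_discrete.subset
    fun _ hd => subset_tsupport g (Function.mem_support.2 hd)

theorem tendsto_autoCorr_image_intCast {G : ι → Finset ℤ} (hG : ∀ᶠ n in l, (G n).Nonempty)
    (hpairs : ∀ d : ℤ, d ≠ 0 →
      (fun n => (#{y ∈ G n | y + d ∈ G n} : ℝ)) =o[l] fun n => (#(G n) : ℝ))
    (hf : HasCompactSupport f) :
    Tendsto (fun n => autoCorr ((fun y : ℤ => (y : ℝ)) '' G n) f) l (𝓝 (f 0)) := by
  let E := insert 0 (finite_intCast_ne_zero_of_hasCompactSupport hf).toFinset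
  have hE (d : ℤ) (hd : f d ≠ 0) : d ∈ E := by simp [E, hd]
  have frequency_tendsto (d : ℤ) : Tendsto (fun n => (#{y ∈ G n | y + d ∈ G n} : ℂ) / #(G n)) l
      (𝓝 (if d = 0 then 1 else 0)) := by
    split_ifs with hd
    · refine tendsto_const_nhds.congr' ?_
      filter_upwards [hG] with n hn
      have card_ne_zero : (#(G n) : ℂ) ≠ 0 := mod_cast hn.card_ne_zero
      simp [hd, card_ne_zero]
    · simpa using (hpairs d hd).tendsto_div_nhds_zero.ofReal
  have limit_eq : f 0 = ∑ d ∈ E, f d * if d = 0 then 1 else 0 := by simp [E]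
  simp only [autoCorr_image_intCast _ hE]
  rw [limit_eq]
  exact tendsto_finsetSum _ fun d _ => (frequency_tendsto d).const_mul (f d)

/-- The primes of `ℤ` in `[a, b]`, that is, the prime numbers and their negatives in that
interval. -/
noncomputable def primesIcc (a b : ℝ) : Finset ℤ :=
  {l ∈ Finset.Icc ⌈a⌉ ⌊b⌋ | Prime l}

lemma mem_primesIcc {a b : ℝ} {y : ℤ} : y ∈ primesIcc a b ↔ (a ≤ y ∧ y ≤ b) ∧ Prime y := by
  simp [primesIcc, Int.ceil_le, Int.le_floor]

lemma mem_PrimesR_iff {x : ℝ} : x ∈ PrimesR ↔ ∃ y : ℤ, Prime y ∧ (y : ℝ) = x := by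
  constructor
  · rintro ⟨p, hp, rfl | rfl⟩
    · exact ⟨p, Nat.prime_iff_prime_int.1 hp, by simp⟩
    · exact ⟨-p, (Nat.prime_iff_prime_int.1 hp).neg, by simp⟩
  · rintro ⟨y, hy, rfl⟩
    refine ⟨y.natAbs, Int.prime_iff_natAbs_prime.1 hy, ?_⟩
    rw [Nat.cast_natAbs, Int.cast_abs]
    exact eq_or_eq_neg_of_abs_eq rfl

lemma PrimesR_inter_Icc (a b : ℝ) :
    PrimesR ∩ Icc a b = (fun y : ℤ => (y : ℝ)) '' primesIcc a b := by
  ext x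
  simp only [mem_inter_iff, mem_PrimesR_iff, mem_Icc, mem_image, Finset.mem_coe, mem_primesIcc]
  grind

lemma natAbs_le_of_mem_primesIcc {a b : ℝ} {y : ℤ} (hy : y ∈ primesIcc a b) :
    y.natAbs ≤ ⌊max b (-a)⌋₊ := by
  obtain ⟨⟨hay, hyb⟩, -⟩ := mem_primesIcc.1 hy
  refine Nat.le_floor ?_
  rw [Nat.cast_natAbs, Int.cast_abs, abs_le']
  exact ⟨hyb.trans (le_max_left _ _), (neg_le_neg hay).trans (le_max_right _ _)⟩

lemma filter_add_mem_primesIcc_subset (a b : ℝ) (d : ℤ) :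
    {y ∈ primesIcc a b | y + d ∈ primesIcc a b} ⊆
      primePairs d (-⌊max b (-a)⌋₊) (2 * ⌊max b (-a)⌋₊ + 1) := by
  intro y hy
  obtain ⟨hy, hyd⟩ := Finset.mem_filter.1 hy
  have natAbs_le := natAbs_le_of_mem_primesIcc hy
  refine Finset.mem_filter.2 ⟨Finset.mem_Ico.2 ?_, (mem_primesIcc.1 hy).2, (mem_primesIcc.1 hyd).2⟩
  omega

lemma primeCounting_floor_le_card_primesIcc {a b : ℝ} (ha : a ≤ 0) (hb : 0 ≤ b) :
    Nat.primeCounting ⌊max b (-a)⌋₊ ≤ #(primesIcc a b) := by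
  rw [← Nat.primesLE_card_eq_primeCounting]
  have natCast_le {p : ℕ} (hp : p ∈ Nat.primesLE ⌊max b (-a)⌋₊) : (p : ℝ) ≤ max b (-a) :=
    (Nat.le_floor_iff (hb.trans (le_max_left _ _))).1 (Nat.le_of_mem_primesLE hp)
  have prime {p : ℕ} (hp : p ∈ Nat.primesLE ⌊max b (-a)⌋₊) : Prime (p : ℤ) :=
    Nat.prime_iff_prime_int.1 (Nat.prime_of_mem_primesLE hp)
  rcases le_total b (-a) with hba | hab
  · refine Finset.card_le_card_of_injOn (fun p => -(p : ℤ)) (fun p hp => ?_) fun p _ q _ => by simp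
    have hpa := natCast_le hp
    rw [max_eq_right hba] at hpa
    refine mem_primesIcc.2 ⟨⟨?_, ?_⟩, (prime hp).neg⟩ <;> push_cast <;> linarith
  · refine Finset.card_le_card_of_injOn (fun p => (p : ℤ)) (fun p hp => ?_) fun p _ q _ => by simp
    have hpb := natCast_le hp
    rw [max_eq_left hab] at hpb
    refine mem_primesIcc.2 ⟨⟨?_, ?_⟩, prime hp⟩ <;> push_cast <;> linarith

theorem primesIcc_pairs_isLittleO {a b : ι → ℝ} (h0 : ∀ n, a n ≤ 0 ∧ 0 ≤ b n)
    (hM : Tendsto (fun n => ⌊max (b n) (-a n)⌋₊) l atTop) {d : ℤ} (hd : d ≠ 0) :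
    (fun n => (#{y ∈ primesIcc (a n) (b n) | y + d ∈ primesIcc (a n) (b n)} : ℝ)) =o[l]
      fun n => (#(primesIcc (a n) (b n)) : ℝ) := by
  have pairs_le := fun n => Finset.card_le_card (filter_add_mem_primesIcc_subset (a n) (b n) d)
  have primes_ge := fun n => primeCounting_floor_le_card_primesIcc (h0 n).1 (h0 n).2
  refine (IsBigO.of_norm_le fun n => ?_).trans_isLittleO
    (((card_primePairs_isLittleO_primeCounting hd).comp_tendsto hM).trans_isBigO
      (IsBigO.of_norm_le fun n => ?_))
  · simpa using pairs_le n
  · simpa using primes_ge n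

lemma tendsto_floor_max_neg {a b : ι → ℝ} (hw : Tendsto (fun n => b n - a n) l atTop) :
    Tendsto (fun n => ⌊max (b n) (-a n)⌋₊) l atTop := by
  refine tendsto_nat_floor_atTop.comp
    (tendsto_atTop_mono (fun n => ?_) (hw.atTop_div_const two_pos))
  linarith [le_max_left (b n) (-a n), le_max_right (b n) (-a n)]

end Autocorrelation

theorem primes_counting_autocorrelation_zero_in_intervals_general {ι : Type*} {l : Filter ι}
    (a b : ι → ℝ) (h0 : ∀ n, a n ≤ 0 ∧ 0 ≤ b n) (hw : Tendsto (fun n => b n - a n) l atTop)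
    (f : ℝ → ℂ) (hf : HasCompactSupport f) :
    Tendsto (fun n => autoCorr (PrimesR ∩ Set.Icc (a n) (b n)) f) l (𝓝 (f 0)) := by
  have radius_tendsto := tendsto_floor_max_neg hw
  have eventually_nonempty : ∀ᶠ n in l, (primesIcc (a n) (b n)).Nonempty := by
    filter_upwards [(Nat.tendsto_primeCounting.comp radius_tendsto).eventually_gt_atTop 0] with n hn
    exact Finset.card_pos.1 (hn.trans_le (primeCounting_floor_le_card_primesIcc (h0 n).1 (h0 n).2))
  simp only [PrimesR_inter_Icc]
  exact tendsto_autoCorr_image_intCast eventually_nonempty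
    (fun d hd => primesIcc_pairs_isLittleO h0 radius_tendsto hd) hf

theorem primes_counting_autocorrelation_zero_in_intervals
    (a b : ℕ → ℝ) (h0 : ∀ n, a n ≤ 0 ∧ 0 ≤ b n)
    (hw : Tendsto (fun n => b n - a n) atTop atTop) :
    ∀ f : ℝ → ℂ, Continuous f → HasCompactSupport f →
      Tendsto (fun n => autoCorr (PrimesR ∩ Set.Icc (a n) (b n)) f) atTop (nhds (f 0)) := by
  exact fun f _ hf => primes_counting_autocorrelation_zero_in_intervals_general a b h0 hw f hf
end

section
/- The set ℙ of primes and their negatives has counting autocorrelation δ_0 with respect to the van Hove sequence A_n = [−n, n]: writing F_n = ℙ ∩ [−n, n], for every continuous compactly supported f : ℝ → ℂ one has (1/card F_n)·Σ_{x,y∈F_n} f(x−y) → f(0) as n → ∞. -/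
open Filter Topology Set

/-!
Grouping the double sum by `k = x - y` gives `∑ k, f k * N_k(n) / card F_n`, where `N_k(n)` counts
the pairs in `F_n` with difference `k`. The term `k = 0` is `f 0`, so it suffices that
`N_k(n) = o(card F_n)` for each `k ≠ 0`. By Chebyshev, `card F_n` is at least of order `n / log n`.

Choose a squarefree `W` coprime to `k`. Outside a bounded set, both members of a pair are units
modulo `W`, which leaves at most `∏_{q ∣ W} (q - 2)` residue classes for `x`. In each class
Selberg's sieve, applied to the single condition that `x` is prime, bounds the number of `x` by a
multiple of `∏_{q ∣ W} (1 + 1 / q) * n / (W * log n)`. Hence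
`limsup N_k(n) / card F_n ≤ C * exp (-∑_{q ∣ W} 1 / q)`, and the exponent can be made arbitrarily
large because the sum of the reciprocals of the primes diverges.
-/

open scoped ArithmeticFunction.Moebius Finset Nat

/-! ### Ramanujan sums -/

lemma sum_divisors_filter_dvd_moebius_div {l : ℕ} (hl : 0 < l) (e : ℕ) :
    ∑ d ∈ l.divisors with e ∣ d, μ (l / d) = if l = e then 1 else 0 := by
  have inversion := (ArithmeticFunction.sum_eq_iff_sum_mul_moebius_eq
    (f := fun n ↦ if n = e then (1 : ℤ) else 0) (g := fun n ↦ if e ∣ n then 1 else 0)).1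
    (fun n hn ↦ by simp [hn.ne']) l hl
  simp only [Int.cast_id] at inversion
  rw [Nat.sum_divisorsAntidiagonal' fun x y ↦ μ x * if e ∣ y then 1 else 0] at inversion
  simpa [Finset.sum_filter] using inversion

lemma gcd_eq_sum_totient {d l : ℕ} (hl : l ≠ 0) (hd : d ∣ l) (d' : ℕ) :
    d.gcd d' = ∑ e ∈ l.divisors with e ∣ d ∧ e ∣ d', φ e := by
  simp_rw [← Nat.dvd_gcd_iff]
  rw [Nat.divisors_filter_dvd_of_dvd hl ((Nat.gcd_dvd_left d d').trans hd), Nat.sum_totient]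

lemma sum_sum_moebius_div_mul_gcd {l l' : ℕ} (hl : 0 < l) (hl' : 0 < l') :
    ∑ d ∈ l.divisors, ∑ d' ∈ l'.divisors, μ (l / d) * μ (l' / d') * (d.gcd d' : ℤ) =
      if l = l' then (φ l : ℤ) else 0 := by
  have expand_gcd : ∀ d ∈ l.divisors, ∀ d' ∈ l'.divisors,
      μ (l / d) * μ (l' / d') * (d.gcd d' : ℤ) = ∑ e ∈ l.divisors, (φ e : ℤ) *
        ((if e ∣ d then μ (l / d) else 0) * (if e ∣ d' then μ (l' / d') else 0)) := by
    intro d hd d' _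
    rw [gcd_eq_sum_totient hl.ne' (Nat.dvd_of_mem_divisors hd), Finset.sum_filter]
    push_cast
    rw [Finset.mul_sum]
    refine Finset.sum_congr rfl fun e _ ↦ ?_
    by_cases hd : e ∣ d <;> by_cases hd' : e ∣ d' <;> simp [hd, hd', mul_comm]
  calc
    _ = ∑ d ∈ l.divisors, ∑ d' ∈ l'.divisors, ∑ e ∈ l.divisors, (φ e : ℤ) *
          ((if e ∣ d then μ (l / d) else 0) * (if e ∣ d' then μ (l' / d') else 0)) :=
      Finset.sum_congr rfl fun d hd ↦ Finset.sum_congr rfl (expand_gcd d hd)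
    _ = ∑ e ∈ l.divisors, (φ e : ℤ) *
          ((∑ d ∈ l.divisors with e ∣ d, μ (l / d)) *
            ∑ d' ∈ l'.divisors with e ∣ d', μ (l' / d')) := by
      simp_rw [Finset.sum_filter, Finset.sum_mul_sum, Finset.mul_sum]
      rw [Finset.sum_comm (s := l.divisors) (t := l.divisors)]
      exact (Finset.sum_congr rfl fun d _ ↦ Finset.sum_comm).symm
    _ = _ := by
      simp_rw [sum_divisors_filter_dvd_moebius_div hl, sum_divisors_filter_dvd_moebius_div hl']
      rw [Finset.sum_eq_single_of_mem l (by simp [hl.ne']) fun e _ he ↦ by simp [he.symm]]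
      by_cases h : l = l' <;> simp [h, eq_comm]

/-- The Ramanujan sum `c_l(z)`, the sum of the `z`-th powers of the primitive `l`-th roots of
unity, given by its closed form `∑_{d ∣ (l, z)} d μ(l / d)`. It is the building block of the
sieve weights. -/
def ramanujanSum (l : ℕ) (z : ℤ) : ℤ :=
  ∑ d ∈ l.divisors, if (d : ℤ) ∣ z then d * μ (l / d) else 0

lemma ramanujanSum_of_isCoprime {l : ℕ} {z : ℤ} (hl : l ≠ 0) (h : IsCoprime (l : ℤ) z) :
    ramanujanSum l z = μ l := by
  have not_dvd : ∀ d ∈ l.divisors, d ≠ 1 → ¬ (d : ℤ) ∣ z := fun d hd hd1 hdz ↦ hd1 <| by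
    simpa [Int.isUnit_iff_natAbs_eq] using
      h.isUnit_of_dvd' (Int.natCast_dvd_natCast.2 (Nat.dvd_of_mem_divisors hd)) hdz
  rw [ramanujanSum, Finset.sum_eq_single_of_mem 1 (by simp [hl])
    fun d hd hd1 ↦ if_neg (not_dvd d hd hd1)]
  simp

lemma sum_ramanujanSum_mul_ramanujanSum (A : Finset ℤ) (l l' : ℕ) :
    ∑ z ∈ A, ramanujanSum l z * ramanujanSum l' z =
      ∑ d ∈ l.divisors, ∑ d' ∈ l'.divisors, (d * μ (l / d)) * (d' * μ (l' / d')) *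
        (#{z ∈ A | (d.lcm d' : ℤ) ∣ z} : ℤ) := by
  simp_rw [ramanujanSum, Finset.sum_mul_sum]
  rw [Finset.sum_comm]
  refine Finset.sum_congr rfl fun d _ ↦ ?_
  rw [Finset.sum_comm]
  refine Finset.sum_congr rfl fun d' _ ↦ ?_
  rw [Finset.card_filter, Nat.cast_sum, Finset.mul_sum]
  refine Finset.sum_congr rfl fun z _ ↦ ?_
  have lcm_dvd : (d.lcm d' : ℤ) ∣ z ↔ (d : ℤ) ∣ z ∧ (d' : ℤ) ∣ z := by
    simp only [Int.natCast_dvd, Nat.lcm_dvd_iff]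
  by_cases hd : (d : ℤ) ∣ z <;> by_cases hd' : (d' : ℤ) ∣ z <;> simp [lcm_dvd, hd, hd']

lemma sum_divisors_le_sq (l : ℕ) : ∑ d ∈ l.divisors, (d : ℝ) ≤ (l : ℝ) ^ 2 :=
  calc
    ∑ d ∈ l.divisors, (d : ℝ) ≤ #l.divisors * (l : ℝ) := by
      simpa using Finset.sum_le_card_nsmul l.divisors (fun d ↦ (d : ℝ)) l
        fun d hd ↦ Nat.cast_le.2 (Nat.divisor_le hd)
    _ ≤ (l : ℝ) ^ 2 := by
      rw [sq]
      gcongr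
      exact Nat.card_divisors_le_self l

lemma abs_natCast_mul_moebius_le (d m : ℕ) : |(d * μ m : ℝ)| ≤ d := by
  rw [abs_mul, Nat.abs_cast]
  exact mul_le_of_le_one_right d.cast_nonneg (mod_cast ArithmeticFunction.abs_moebius_le_one)

lemma sum_sum_mul_moebius_div_lcm {l l' : ℕ} (hl : 0 < l) (hl' : 0 < l') (X : ℝ) :
    ∑ d ∈ l.divisors, ∑ d' ∈ l'.divisors,
        (d * μ (l / d) : ℝ) * (d' * μ (l' / d')) * (X / (d.lcm d' : ℕ)) =
      X * if l = l' then (φ l : ℝ) else 0 := by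
  have orthogonality : (∑ d ∈ l.divisors, ∑ d' ∈ l'.divisors,
      (μ (l / d) : ℝ) * μ (l' / d') * d.gcd d') = if l = l' then (φ l : ℝ) else 0 :=
    mod_cast congrArg (Int.cast : ℤ → ℝ) (sum_sum_moebius_div_mul_gcd hl hl')
  simp_rw [← orthogonality, Finset.mul_sum]
  refine Finset.sum_congr rfl fun d hd ↦ Finset.sum_congr rfl fun d' hd' ↦ ?_
  have gcd_mul_lcm : (d.gcd d' : ℝ) * d.lcm d' = d * d' := mod_cast Nat.gcd_mul_lcm d d'
  have lcm_ne_zero : (d.lcm d' : ℝ) ≠ 0 := mod_cast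
    (Nat.lcm_pos (Nat.pos_of_mem_divisors hd) (Nat.pos_of_mem_divisors hd')).ne'
  field_simp
  linear_combination -(μ (l / d) : ℝ) * μ (l' / d') * X * gcd_mul_lcm

/-! ### The sieve -/

/-- The sieve axiom of density `1 / d`: for every `d` coprime to `W`, the number of multiples of
`d` in `A` is `X / d` up to an error of at most `1`. -/
def IsEquidistributed (A : Finset ℤ) (X : ℝ) (W : ℕ) : Prop :=
  ∀ d : ℕ, d ≠ 0 → W.Coprime d → |(#{z ∈ A | (d : ℤ) ∣ z} : ℝ) - X / d| ≤ 1

section Sieve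

variable {A : Finset ℤ} {X : ℝ} {W : ℕ}

lemma IsEquidistributed.abs_sum_ramanujanSum_mul_sub_le (hA : IsEquidistributed A X W)
    {l l' : ℕ} (hl : 0 < l) (hl' : 0 < l') (hlW : W.Coprime l) (hlW' : W.Coprime l') :
    |∑ z ∈ A, (ramanujanSum l z * ramanujanSum l' z : ℝ) -
        X * if l = l' then (φ l : ℝ) else 0| ≤ (l : ℝ) ^ 2 * (l' : ℝ) ^ 2 := by
  have expansion := congrArg (Int.cast : ℤ → ℝ) (sum_ramanujanSum_mul_ramanujanSum A l l')
  push_cast at expansion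
  rw [expansion, ← sum_sum_mul_moebius_div_lcm hl hl' X]
  simp_rw [← Finset.sum_sub_distrib, ← mul_sub]
  calc
    _ ≤ ∑ d ∈ l.divisors, ∑ d' ∈ l'.divisors, (d * d' : ℝ) := by
      refine (Finset.abs_sum_le_sum_abs _ _).trans (Finset.sum_le_sum fun d hd ↦ ?_)
      refine (Finset.abs_sum_le_sum_abs _ _).trans (Finset.sum_le_sum fun d' hd' ↦ ?_)
      have hlcm : d.lcm d' ≠ 0 :=
        (Nat.lcm_pos (Nat.pos_of_mem_divisors hd) (Nat.pos_of_mem_divisors hd')).ne'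
      have hcoprime : W.Coprime (d.lcm d') :=
        ((hlW.coprime_dvd_right (Nat.dvd_of_mem_divisors hd)).mul_right
          (hlW'.coprime_dvd_right (Nat.dvd_of_mem_divisors hd'))).coprime_dvd_right
            (Nat.lcm_dvd_mul d d')
      rw [abs_mul, abs_mul, ← mul_one (d * d' : ℝ)]
      gcongr
      exacts [abs_natCast_mul_moebius_le _ _, abs_natCast_mul_moebius_le _ _, hA _ hlcm hcoprime]
    _ = (∑ d ∈ l.divisors, (d : ℝ)) * ∑ d' ∈ l'.divisors, (d' : ℝ) := by rw [Finset.sum_mul_sum]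
    _ ≤ (l : ℝ) ^ 2 * (l' : ℝ) ^ 2 := by
      gcongr <;> exact sum_divisors_le_sq _

/-- The moduli of the sieve of level `R`: squarefree numbers up to `R` coprime to `W`. -/
def sieveModuli (R W : ℕ) : Finset ℕ := {l ∈ Finset.Icc 1 R | Squarefree l ∧ W.Coprime l}

/-- The denominator `∑_l 1 / φ(l)` in the main term of the sieve. -/
noncomputable def sieveDenominator (R W : ℕ) : ℝ := ∑ l ∈ sieveModuli R W, (φ l : ℝ)⁻¹

/-- The elements of `A` coprime to all moduli of the sieve of level `R`. -/
noncomputable def sifted (A : Finset ℤ) (R W : ℕ) : Finset ℤ :=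
  {z ∈ A | ∀ l ∈ sieveModuli R W, IsCoprime (l : ℤ) z}

/-- Selberg's weight `∑_l μ(l) c_l(z) / φ(l)`, which is constant on the sifted set. -/
noncomputable def sieveWeight (R W : ℕ) (z : ℤ) : ℝ :=
  ∑ l ∈ sieveModuli R W, (μ l / φ l : ℝ) * ramanujanSum l z

lemma mem_sieveModuli {R l : ℕ} :
    l ∈ sieveModuli R W ↔ (1 ≤ l ∧ l ≤ R) ∧ Squarefree l ∧ W.Coprime l := by
  simp [sieveModuli]

lemma card_sieveModuli_le (R W : ℕ) : #(sieveModuli R W) ≤ R := by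
  simpa [sieveModuli] using Finset.card_filter_le (Finset.Icc 1 R) _

lemma one_le_sieveDenominator {R : ℕ} (hR : 1 ≤ R) : 1 ≤ sieveDenominator R W := by
  have one_mem : 1 ∈ sieveModuli R W := by simp [mem_sieveModuli, hR]
  simpa [sieveDenominator] using
    Finset.single_le_sum (f := fun l ↦ (φ l : ℝ)⁻¹) (fun _ _ ↦ by positivity) one_mem

lemma sieveWeight_of_mem_sifted {R : ℕ} {z : ℤ} (hz : z ∈ sifted A R W) :
    sieveWeight R W z = sieveDenominator R W := by
  refine Finset.sum_congr rfl fun l hl ↦ ?_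
  obtain ⟨⟨hl1, _⟩, hsq, _⟩ := mem_sieveModuli.1 hl
  have moebius_sq : (μ l : ℝ) ^ 2 = 1 :=
    mod_cast ArithmeticFunction.moebius_sq_eq_one_of_squarefree hsq
  rw [ramanujanSum_of_isCoprime (by lia) ((Finset.mem_filter.1 hz).2 l hl)]
  linear_combination (φ l : ℝ)⁻¹ * moebius_sq

lemma sum_sieveWeight_sq (A : Finset ℤ) (R W : ℕ) :
    ∑ z ∈ A, sieveWeight R W z ^ 2 = ∑ l ∈ sieveModuli R W, ∑ l' ∈ sieveModuli R W,
      (μ l / φ l : ℝ) * (μ l' / φ l') * ∑ z ∈ A, (ramanujanSum l z * ramanujanSum l' z : ℝ) := by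
  simp_rw [sieveWeight, sq, Finset.sum_mul_sum, Finset.mul_sum]
  rw [Finset.sum_comm]
  refine Finset.sum_congr rfl fun l _ ↦ ?_
  rw [Finset.sum_comm]
  exact Finset.sum_congr rfl fun l' _ ↦ Finset.sum_congr rfl fun z _ ↦ by ring

lemma sum_sum_moebius_div_totient_diagonal (R W : ℕ) (X : ℝ) :
    ∑ l ∈ sieveModuli R W, ∑ l' ∈ sieveModuli R W,
        (μ l / φ l : ℝ) * (μ l' / φ l') * (X * if l = l' then (φ l : ℝ) else 0) =
      X * sieveDenominator R W := by
  rw [sieveDenominator, Finset.mul_sum]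
  refine Finset.sum_congr rfl fun l hl ↦ ?_
  obtain ⟨⟨hl1, _⟩, hsq, _⟩ := mem_sieveModuli.1 hl
  have moebius_sq : (μ l : ℝ) ^ 2 = 1 :=
    mod_cast ArithmeticFunction.moebius_sq_eq_one_of_squarefree hsq
  have totient_ne_zero : (φ l : ℝ) ≠ 0 := mod_cast (Nat.totient_pos.2 hl1).ne'
  simp only [mul_ite, mul_zero, Finset.sum_ite_eq, hl, if_true]
  field_simp
  rw [moebius_sq, one_mul]

lemma abs_moebius_div_totient_le_one (l : ℕ) : |(μ l / φ l : ℝ)| ≤ 1 := by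
  rw [abs_div, Nat.abs_cast]
  rcases (φ l).eq_zero_or_pos with h | h
  · simp [h]
  · refine div_le_one_of_le₀ (le_trans ?_ (mod_cast h : (1 : ℝ) ≤ φ l)) (by positivity)
    exact mod_cast ArithmeticFunction.abs_moebius_le_one

lemma IsEquidistributed.sum_sieveWeight_sq_le (hA : IsEquidistributed A X W) (R : ℕ) :
    ∑ z ∈ A, sieveWeight R W z ^ 2 ≤ X * sieveDenominator R W + (R : ℝ) ^ 6 := by
  rw [← sub_le_iff_le_add', sum_sieveWeight_sq, ← sum_sum_moebius_div_totient_diagonal]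
  simp_rw [← Finset.sum_sub_distrib, ← mul_sub]
  calc
    _ ≤ ∑ l ∈ sieveModuli R W, ∑ l' ∈ sieveModuli R W, (R : ℝ) ^ 4 := by
      refine Finset.sum_le_sum fun l hl ↦ Finset.sum_le_sum fun l' hl' ↦ ?_
      obtain ⟨⟨hl1, hlR⟩, _, hlW⟩ := mem_sieveModuli.1 hl
      obtain ⟨⟨hl1', hlR'⟩, _, hlW'⟩ := mem_sieveModuli.1 hl'
      refine (le_abs_self _).trans ?_
      rw [abs_mul, abs_mul]
      calc
        _ ≤ 1 * 1 * ((l : ℝ) ^ 2 * (l' : ℝ) ^ 2) := by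
          gcongr
          exacts [abs_moebius_div_totient_le_one l, abs_moebius_div_totient_le_one l',
            hA.abs_sum_ramanujanSum_mul_sub_le hl1 hl1' hlW hlW']
        _ ≤ 1 * 1 * ((R : ℝ) ^ 2 * (R : ℝ) ^ 2) := by gcongr
        _ = (R : ℝ) ^ 4 := by ring
    _ = (#(sieveModuli R W) : ℝ) ^ 2 * (R : ℝ) ^ 4 := by
      simp only [Finset.sum_const, nsmul_eq_mul]
      ring
    _ ≤ (R : ℝ) ^ 2 * (R : ℝ) ^ 4 := by
      gcongr
      exact card_sieveModuli_le R W
    _ = (R : ℝ) ^ 6 := by ring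

theorem IsEquidistributed.card_sifted_le (hA : IsEquidistributed A X W) {R : ℕ} (hR : 1 ≤ R) :
    (#(sifted A R W) : ℝ) ≤ X / sieveDenominator R W + (R : ℝ) ^ 6 := by
  have hS : 1 ≤ sieveDenominator R W := one_le_sieveDenominator hR
  set S := sieveDenominator R W
  have second_moment : (#(sifted A R W) : ℝ) * S ^ 2 ≤ X * S + (R : ℝ) ^ 6 :=
    calc
      (#(sifted A R W) : ℝ) * S ^ 2 = ∑ z ∈ sifted A R W, sieveWeight R W z ^ 2 := by
        rw [Finset.sum_congr rfl fun z hz ↦ by rw [sieveWeight_of_mem_sifted hz],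
          Finset.sum_const, nsmul_eq_mul]
      _ ≤ ∑ z ∈ A, sieveWeight R W z ^ 2 :=
        Finset.sum_le_sum_of_subset_of_nonneg (Finset.filter_subset _ _) fun _ _ _ ↦ sq_nonneg _
      _ ≤ X * S + (R : ℝ) ^ 6 := hA.sum_sieveWeight_sq_le R
  calc
    (#(sifted A R W) : ℝ) ≤ (X * S + (R : ℝ) ^ 6) / S ^ 2 := by rwa [le_div_iff₀ (by positivity)]
    _ = X / S + (R : ℝ) ^ 6 / S ^ 2 := by field_simp
    _ ≤ X / S + (R : ℝ) ^ 6 := by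
      gcongr
      exact div_le_self (by positivity) (one_le_pow₀ hS)

end Sieve

/-! ### Arithmetic progressions -/

lemma abs_card_Ico_filter_modEq_sub_le {a b r : ℤ} (hab : a ≤ b) (hr : 0 < r) (v : ℤ) :
    |(#{z ∈ Finset.Ico a b | z ≡ v [ZMOD r]} : ℝ) - (b - a) / r| ≤ 1 := by
  have endpoints_le : ((a : ℚ) - v) / r ≤ (b - v) / r :=
    div_le_div_of_nonneg_right (by gcongr) (mod_cast hr.le)
  have card_eq := Int.Ico_filter_modEq_card a b hr v
  rw [max_eq_left (sub_nonneg.2 (Int.ceil_le_ceil endpoints_le))] at card_eq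
  have card_eq_rat : (#{z ∈ Finset.Ico a b | z ≡ v [ZMOD r]} : ℚ) =
      ⌈((b : ℚ) - v) / r⌉ - ⌈((a : ℚ) - v) / r⌉ := mod_cast card_eq
  have abs_le_one : |(#{z ∈ Finset.Ico a b | z ≡ v [ZMOD r]} : ℚ) - (b - a) / r| ≤ 1 := by
    have difference : ((b : ℚ) - a) / r = (b - v) / r - (a - v) / r := by ring
    rw [card_eq_rat, difference, abs_le]
    constructor <;>
      linarith [Int.le_ceil (((a : ℚ) - v) / r), Int.ceil_lt_add_one (((a : ℚ) - v) / r),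
        Int.le_ceil (((b : ℚ) - v) / r), Int.ceil_lt_add_one (((b : ℚ) - v) / r)]
  exact mod_cast abs_le_one

lemma exists_modEq_and_dvd_iff_modEq_mul {W d : ℕ} (h : W.Coprime d) (v : ℤ) :
    ∃ w : ℤ, ∀ z : ℤ, z ≡ v [ZMOD W] ∧ (d : ℤ) ∣ z ↔ z ≡ w [ZMOD (W * d : ℕ)] := by
  obtain ⟨s, t, bezout⟩ : IsCoprime (W : ℤ) d := Nat.isCoprime_iff_coprime.2 h
  have modEq_W : v * (t * d) ≡ v [ZMOD W] :=
    Int.modEq_iff_dvd.2 ⟨v * s, by linear_combination -v * bezout⟩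
  have modEq_d : v * (t * d) ≡ 0 [ZMOD d] := Int.modEq_zero_iff_dvd.2 ⟨v * t, by ring⟩
  refine ⟨v * (t * d), fun z ↦ ?_⟩
  rw [Nat.cast_mul, ← Int.modEq_and_modEq_iff_modEq_mul (by simpa using h),
    ← Int.modEq_zero_iff_dvd]
  exact and_congr ⟨(·.trans modEq_W.symm), (·.trans modEq_W)⟩
    ⟨(·.trans modEq_d.symm), (·.trans modEq_d)⟩

lemma isEquidistributed_Ico_filter_modEq {a b : ℤ} (hab : a ≤ b) {W : ℕ} (hW : 0 < W) (v : ℤ) :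
    IsEquidistributed {z ∈ Finset.Ico a b | z ≡ v [ZMOD W]} (((b : ℝ) - a) / W) W := by
  intro d hd hWd
  obtain ⟨w, hw⟩ := exists_modEq_and_dvd_iff_modEq_mul hWd v
  simp_rw [Finset.filter_filter, hw, div_div]
  exact mod_cast abs_card_Ico_filter_modEq_sub_le hab
    (mod_cast Nat.mul_pos hW (Nat.pos_of_ne_zero hd) : (0 : ℤ) < (W * d : ℕ)) w

/-! ### A lower bound for the sieve denominator -/

lemma exists_sq_mul_divisor_mul_sieveModulus {R W m : ℕ} (hW : W ≠ 0) (hm : m ∈ Finset.Icc 1 R) :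
    ∃ t ∈ Finset.Ioo 0 (R + 1) ×ˢ W.divisors ×ˢ sieveModuli R W, t.1 ^ 2 * (t.2.1 * t.2.2) = m := by
  obtain ⟨hm1, hmR⟩ := Finset.mem_Icc.1 hm
  obtain ⟨s, b, hs, hb, hbs, hsq⟩ := Nat.sq_mul_squarefree_of_pos hm1
  have hgs : s.gcd W ∣ s := Nat.gcd_dvd_left s W
  have hsm : s ≤ m := hbs ▸ Nat.le_mul_of_pos_left s (pow_pos hb 2)
  have hbm : b ≤ m := Nat.le_of_dvd hm1 (hbs ▸ (dvd_pow_self b two_ne_zero).mul_right s)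
  refine ⟨(b, s.gcd W, s / s.gcd W), ?_, by simp only [Nat.mul_div_cancel' hgs, hbs]⟩
  simp only [Finset.mem_product, Finset.mem_Ioo, Nat.mem_divisors, mem_sieveModuli]
  exact ⟨⟨hb, by lia⟩, ⟨Nat.gcd_dvd_right s W, hW⟩,
    ⟨Nat.div_pos (Nat.le_of_dvd hs hgs) (Nat.gcd_pos_of_pos_left W hs),
      (Nat.div_le_self _ _).trans (hsm.trans hmR)⟩,
    hsq.squarefree_of_dvd (Nat.div_dvd_of_dvd hgs),
    (Nat.coprime_div_gcd_of_squarefree hsq hW).symm⟩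

lemma sum_Icc_inv_le_mul_sum_sieveModuli_inv (R : ℕ) {W : ℕ} (hW : W ≠ 0) :
    ∑ m ∈ Finset.Icc 1 R, (m : ℝ)⁻¹ ≤ (∑ b ∈ Finset.Ioo 0 (R + 1), ((b : ℝ) ^ 2)⁻¹) *
      ((∑ u ∈ W.divisors, (u : ℝ)⁻¹) * ∑ l ∈ sieveModuli R W, (l : ℝ)⁻¹) := by
  have subset_image : Finset.Icc 1 R ⊆
      (Finset.Ioo 0 (R + 1) ×ˢ W.divisors ×ˢ sieveModuli R W).image
        fun t ↦ t.1 ^ 2 * (t.2.1 * t.2.2) :=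
    fun m hm ↦ Finset.mem_image.2 (exists_sq_mul_divisor_mul_sieveModulus hW hm)
  refine (Finset.sum_le_sum_of_subset_of_nonneg subset_image fun _ _ _ ↦ by positivity).trans
    ((Finset.sum_image_le_of_nonneg fun _ _ ↦ by positivity).trans_eq ?_)
  simp_rw [Finset.sum_mul_sum, Finset.sum_product, Finset.mul_sum, Nat.cast_mul, Nat.cast_pow,
    mul_inv]

lemma log_add_one_le_mul_sieveDenominator (R : ℕ) {W : ℕ} (hW : W ≠ 0) :
    Real.log (R + 1) ≤ 2 * (∑ u ∈ W.divisors, (u : ℝ)⁻¹) * sieveDenominator R W := by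
  have log_le_harmonic : Real.log (R + 1) ≤ ∑ m ∈ Finset.Icc 1 R, (m : ℝ)⁻¹ := by
    simpa [harmonic_eq_sum_Icc] using log_add_one_le_harmonic R
  have sum_inv_sq_le : ∑ b ∈ Finset.Ioo 0 (R + 1), ((b : ℝ) ^ 2)⁻¹ ≤ 2 := by
    simpa using sum_Ioo_inv_sq_le (α := ℝ) 0 (R + 1)
  have sum_inv_le : ∑ l ∈ sieveModuli R W, (l : ℝ)⁻¹ ≤ sieveDenominator R W := by
    refine Finset.sum_le_sum fun l hl ↦ ?_
    have totient_pos : 0 < φ l := Nat.totient_pos.2 (mem_sieveModuli.1 hl).1.1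
    gcongr
    exact Nat.totient_le l
  calc
    Real.log (R + 1) ≤ _ := log_le_harmonic.trans (sum_Icc_inv_le_mul_sum_sieveModuli_inv R hW)
    _ ≤ 2 * ((∑ u ∈ W.divisors, (u : ℝ)⁻¹) * sieveDenominator R W) := by gcongr
    _ = _ := by ring

lemma sum_divisors_inv_eq_prod_primeFactors {W : ℕ} (hW : Squarefree W) :
    ∑ u ∈ W.divisors, (u : ℝ)⁻¹ = ∏ q ∈ W.primeFactors, (1 + (q : ℝ)⁻¹) := by
  let inverse : ArithmeticFunction ℝ := ⟨fun n ↦ (n : ℝ)⁻¹, by simp⟩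
  have inverse_isMultiplicative : inverse.IsMultiplicative :=
    ArithmeticFunction.IsMultiplicative.iff_ne_zero.2
      ⟨by simp [inverse], fun _ _ _ ↦ by simp [inverse, mul_comm]⟩
  simpa [inverse] using
    (inverse_isMultiplicative.prodPrimeFactors_one_add_of_squarefree hW).symm

/-! ### Admissible residue classes -/

lemma card_filter_emod_mem_le_prod {W : ℕ} (hW : Squarefree W) (B : ℕ → Finset ℤ) :
    #{a ∈ Finset.Ico 0 (W : ℤ) | ∀ q ∈ W.primeFactors, a % (q : ℤ) ∈ B q} ≤
      ∏ q ∈ W.primeFactors, #(B q) := by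
  rw [← Finset.card_pi]
  refine Finset.card_le_card_of_injOn (fun a q _ ↦ a % (q : ℤ)) (fun a ha ↦ ?_)
    fun a ha b hb hab ↦ ?_
  · exact Finset.mem_pi.2 (Finset.mem_filter.1 ha).2
  · have ha' := Finset.mem_Ico.1 (Finset.mem_filter.1 ha).1
    have hb' := Finset.mem_Ico.1 (Finset.mem_filter.1 hb).1
    have W_dvd : (W : ℤ) ∣ b - a := by
      rw [← Nat.prod_primeFactors_of_squarefree hW, Nat.cast_prod]
      refine Finset.prod_dvd_of_coprime (fun p hp q hq hpq ↦ ?_) fun q hq ↦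
        Int.ModEq.dvd (congrFun (congrFun hab q) hq)
      exact Nat.isCoprime_iff_coprime.2 ((Nat.coprime_primes (Nat.prime_of_mem_primeFactors hp)
        (Nat.prime_of_mem_primeFactors hq)).2 hpq)
    have emod_eq : a % W = b % W := Int.modEq_iff_dvd.2 W_dvd
    rwa [Int.emod_eq_of_lt ha'.1 ha'.2, Int.emod_eq_of_lt hb'.1 hb'.2] at emod_eq

/-- The residues `a` modulo `W` for which both `a` and `a - k` are units modulo `W`. -/
noncomputable def admissibleResidues (k : ℤ) (W : ℕ) : Finset ℤ :=
  {a ∈ Finset.Ico 0 (W : ℤ) | IsCoprime (W : ℤ) a ∧ IsCoprime (W : ℤ) (a - k)}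

lemma card_admissibleResidues_le_self (k : ℤ) (W : ℕ) : #(admissibleResidues k W) ≤ W := by
  simpa [admissibleResidues] using Finset.card_filter_le (Finset.Ico 0 (W : ℤ)) _

lemma not_dvd_of_mem_primeFactors_of_isCoprime {W q : ℕ} (hq : q ∈ W.primeFactors) {z : ℤ}
    (h : IsCoprime (W : ℤ) z) : ¬ (q : ℤ) ∣ z := fun hqz ↦
  (Nat.prime_iff_prime_int.1 (Nat.prime_of_mem_primeFactors hq)).not_isUnit
    (h.isUnit_of_dvd' (Int.natCast_dvd_natCast.2 (Nat.dvd_of_mem_primeFactors hq)) hqz)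

lemma card_admissibleResidues_le_prod {k : ℤ} {W : ℕ} (hW : Squarefree W)
    (hk : IsCoprime (W : ℤ) k) :
    (#(admissibleResidues k W) : ℝ) ≤ ∏ q ∈ W.primeFactors, ((q : ℝ) - 2) := by
  let B (q : ℕ) : Finset ℤ := ((Finset.Ico 0 (q : ℤ)).erase 0).erase (k % q)
  have card_B : ∀ q ∈ W.primeFactors, (#(B q) : ℝ) = q - 2 := fun q hq ↦ by
    have hq2 : 2 ≤ q := (Nat.prime_of_mem_primeFactors hq).two_le
    have hkq : k % q ≠ 0 := fun h ↦
      not_dvd_of_mem_primeFactors_of_isCoprime hq hk (Int.dvd_of_emod_eq_zero h)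
    have k_mem : k % q ∈ (Finset.Ico 0 (q : ℤ)).erase 0 := by
      simp only [Finset.mem_erase, Finset.mem_Ico]
      exact ⟨hkq, Int.emod_nonneg _ (by lia), Int.emod_lt_of_pos _ (by lia)⟩
    rw [Finset.card_erase_of_mem k_mem, Finset.card_erase_of_mem (by simp; lia), Int.card_Ico,
      sub_zero, Int.toNat_natCast, Nat.sub_sub, Nat.cast_sub hq2, Nat.cast_ofNat]
  have subset_filter : admissibleResidues k W ⊆
      {a ∈ Finset.Ico 0 (W : ℤ) | ∀ q ∈ W.primeFactors, a % q ∈ B q} := fun a ha ↦ by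
    obtain ⟨haW, hcop, hcop_sub⟩ := Finset.mem_filter.1 ha
    refine Finset.mem_filter.2 ⟨haW, fun q hq ↦ ?_⟩
    have hq0 : (0 : ℤ) < q := mod_cast (Nat.prime_of_mem_primeFactors hq).pos
    simp only [B, Finset.mem_erase, Finset.mem_Ico]
    exact ⟨fun h ↦ not_dvd_of_mem_primeFactors_of_isCoprime hq hcop_sub (Int.ModEq.dvd h.symm),
      fun h ↦ not_dvd_of_mem_primeFactors_of_isCoprime hq hcop (Int.dvd_of_emod_eq_zero h),
      Int.emod_nonneg _ hq0.ne', Int.emod_lt_of_pos _ hq0⟩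
  calc
    (#(admissibleResidues k W) : ℝ) ≤ ((∏ q ∈ W.primeFactors, #(B q) : ℕ) : ℝ) := mod_cast
      (Finset.card_le_card subset_filter).trans (card_filter_emod_mem_le_prod hW B)
    _ = ∏ q ∈ W.primeFactors, ((q : ℝ) - 2) := by
      rw [Nat.cast_prod, Finset.prod_congr rfl card_B]

lemma sub_two_mul_one_add_inv_le_mul_exp_neg_inv {x : ℝ} (hx : 0 < x) :
    (x - 2) * (1 + x⁻¹) ≤ x * Real.exp (-x⁻¹) :=
  calc
    (x - 2) * (1 + x⁻¹) = x * (-x⁻¹ + 1) - 2 * x⁻¹ := by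
      field_simp
      ring
    _ ≤ x * (-x⁻¹ + 1) := sub_le_self _ (by positivity)
    _ ≤ x * Real.exp (-x⁻¹) := by
      gcongr
      exact Real.add_one_le_exp _

lemma card_admissibleResidues_mul_sum_inv_le {k : ℤ} {W : ℕ} (hW : Squarefree W)
    (hk : IsCoprime (W : ℤ) k) :
    #(admissibleResidues k W) * ∑ u ∈ W.divisors, (u : ℝ)⁻¹ ≤
      W * Real.exp (-∑ q ∈ W.primeFactors, (q : ℝ)⁻¹) := by
  have two_le : ∀ q ∈ W.primeFactors, (2 : ℝ) ≤ q := fun q hq ↦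
    mod_cast (Nat.prime_of_mem_primeFactors hq).two_le
  rw [sum_divisors_inv_eq_prod_primeFactors hW]
  calc
    _ ≤ (∏ q ∈ W.primeFactors, ((q : ℝ) - 2)) * ∏ q ∈ W.primeFactors, (1 + (q : ℝ)⁻¹) := by
      gcongr
      exact card_admissibleResidues_le_prod hW hk
    _ = ∏ q ∈ W.primeFactors, ((q : ℝ) - 2) * (1 + (q : ℝ)⁻¹) := by rw [Finset.prod_mul_distrib]
    _ ≤ ∏ q ∈ W.primeFactors, (q : ℝ) * Real.exp (-(q : ℝ)⁻¹) :=
      Finset.prod_le_prod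
        (fun q hq ↦ mul_nonneg (sub_nonneg.2 (two_le q hq)) (by positivity))
        fun q hq ↦ sub_two_mul_one_add_inv_le_mul_exp_neg_inv (two_pos.trans_le (two_le q hq))
    _ = W * Real.exp (-∑ q ∈ W.primeFactors, (q : ℝ)⁻¹) := by
      rw [Finset.prod_mul_distrib, ← Real.exp_sum, Finset.sum_neg_distrib, ← Nat.cast_prod,
        Nat.prod_primeFactors_of_squarefree hW]

/-! ### Pairs of signed primes with a fixed difference -/

/-- The number of ways to write `k` as a difference of two elements of `A`. -/
def differenceCount (A : Finset ℤ) (k : ℤ) : ℕ := #{z ∈ A | z - k ∈ A}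

/-- The primes up to `n` and their negatives, as integers. -/
noncomputable def signedPrimes (n : ℕ) : Finset ℤ :=
  {z ∈ Finset.Icc (-n : ℤ) n | z.natAbs.Prime}

lemma mem_signedPrimes {n : ℕ} {z : ℤ} :
    z ∈ signedPrimes n ↔ (-n ≤ z ∧ z ≤ n) ∧ z.natAbs.Prime := by
  simp [signedPrimes]

lemma isCoprime_of_lt_natAbs_prime {m : ℕ} {z : ℤ} (hm : m ≠ 0) (hmz : m < z.natAbs)
    (hz : z.natAbs.Prime) : IsCoprime (m : ℤ) z :=
  Int.isCoprime_iff_gcd_eq_one.2 (Nat.coprime_of_lt_prime hm hmz hz).symm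

lemma isCoprime_of_modEq {m z w : ℤ} (h : z ≡ w [ZMOD m]) (hz : IsCoprime m z) :
    IsCoprime m w := by
  obtain ⟨c, hc⟩ := h.dvd
  simpa [← hc] using hz.add_mul_left_right c

lemma filter_sub_mem_signedPrimes_subset (k : ℤ) (n R : ℕ) {W : ℕ} (hW : W ≠ 0) :
    {z ∈ signedPrimes n | z - k ∈ signedPrimes n} ⊆
      (Finset.Icc (-R : ℤ) R ∪ Finset.Icc (-W : ℤ) W ∪ Finset.Icc (k - W) (k + W)) ∪
        (admissibleResidues k W).biUnion fun a ↦
          sifted {z ∈ Finset.Ico (-n : ℤ) (n + 1) | z ≡ a [ZMOD W]} R W := by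
  intro z hz
  simp only [Finset.mem_filter, mem_signedPrimes] at hz
  obtain ⟨⟨hzn, hzp⟩, -, hzkp⟩ := hz
  refine Finset.mem_union.2 (or_iff_not_imp_left.2 fun hlarge ↦ ?_)
  simp only [Finset.mem_union, Finset.mem_Icc, not_or] at hlarge
  obtain ⟨⟨hzR, hzW⟩, hzkW⟩ := hlarge
  have modEq : z ≡ z % W [ZMOD W] := (Int.mod_modEq z W).symm
  refine Finset.mem_biUnion.2 ⟨z % W, Finset.mem_filter.2 ⟨?_, ?_, ?_⟩,
    Finset.mem_filter.2 ⟨?_, fun l hl ↦ ?_⟩⟩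
  · exact Finset.mem_Ico.2 ⟨Int.emod_nonneg _ (by lia), Int.emod_lt_of_pos _ (by lia)⟩
  · exact isCoprime_of_modEq modEq (isCoprime_of_lt_natAbs_prime hW (by lia) hzp)
  · exact isCoprime_of_modEq (modEq.sub_right k)
      (isCoprime_of_lt_natAbs_prime hW (by lia) hzkp)
  · exact Finset.mem_filter.2 ⟨Finset.mem_Ico.2 (by lia), modEq⟩
  · have hl' := (mem_sieveModuli.1 hl).1
    exact isCoprime_of_lt_natAbs_prime (by lia) (by lia) hzp

lemma card_biUnion_sifted_le (k : ℤ) (n : ℕ) {R W : ℕ} (hR : 1 ≤ R) (hW : 0 < W) :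
    (#((admissibleResidues k W).biUnion fun a ↦
        sifted {z ∈ Finset.Ico (-n : ℤ) (n + 1) | z ≡ a [ZMOD W]} R W) : ℝ) ≤
      #(admissibleResidues k W) * ((2 * n + 1) / W / sieveDenominator R W + (R : ℝ) ^ 6) := by
  have card_sifted_le (a : ℤ) :
      (#(sifted {z ∈ Finset.Ico (-n : ℤ) (n + 1) | z ≡ a [ZMOD W]} R W) : ℝ) ≤
        (2 * n + 1) / W / sieveDenominator R W + (R : ℝ) ^ 6 := by
    refine ((isEquidistributed_Ico_filter_modEq (by lia) hW a).card_sifted_le hR).trans_eq ?_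
    push_cast
    ring
  calc
    _ ≤ ∑ a ∈ admissibleResidues k W,
        (#(sifted {z ∈ Finset.Ico (-n : ℤ) (n + 1) | z ≡ a [ZMOD W]} R W) : ℝ) :=
      mod_cast Finset.card_biUnion_le
    _ ≤ _ := by
      rw [← nsmul_eq_mul]
      exact Finset.sum_le_card_nsmul _ _ _ fun a _ ↦ card_sifted_le a

section

variable {k : ℤ} {W : ℕ}

lemma card_admissibleResidues_div_sieveDenominator_le (hW : Squarefree W)
    (hk : IsCoprime (W : ℤ) k) {R : ℕ} (hR : 1 ≤ R) :
    #(admissibleResidues k W) / (W * sieveDenominator R W) ≤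
      2 * Real.exp (-∑ q ∈ W.primeFactors, (q : ℝ)⁻¹) / Real.log (R + 1) := by
  have hW0 : (0 : ℝ) < W := mod_cast Nat.pos_of_ne_zero hW.ne_zero
  have hS : 0 < sieveDenominator R W := one_pos.trans_le (one_le_sieveDenominator hR)
  have hlog : 0 < Real.log (R + 1) := Real.log_pos (by simpa using Nat.pos_of_ne_zero (by lia))
  rw [div_le_div_iff₀ (by positivity) hlog]
  calc
    #(admissibleResidues k W) * Real.log (R + 1)
      ≤ #(admissibleResidues k W) *
          (2 * (∑ u ∈ W.divisors, (u : ℝ)⁻¹) * sieveDenominator R W) := by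
      gcongr
      exact log_add_one_le_mul_sieveDenominator R hW.ne_zero
    _ = 2 * sieveDenominator R W *
          (#(admissibleResidues k W) * ∑ u ∈ W.divisors, (u : ℝ)⁻¹) := by ring
    _ ≤ 2 * sieveDenominator R W *
          (W * Real.exp (-∑ q ∈ W.primeFactors, (q : ℝ)⁻¹)) := by
      gcongr 2 * sieveDenominator R W * ?_
      exact card_admissibleResidues_mul_sum_inv_le hW hk
    _ = _ := by ring

theorem differenceCount_signedPrimes_le (hW : Squarefree W) (hk : IsCoprime (W : ℤ) k) (n : ℕ)
    {R : ℕ} (hR : 1 ≤ R) :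
    (differenceCount (signedPrimes n) k : ℝ) ≤
      (2 * n + 1) * (2 * Real.exp (-∑ q ∈ W.primeFactors, (q : ℝ)⁻¹) / Real.log (R + 1)) +
        W * (R : ℝ) ^ 6 + (2 * R + 4 * W + 3) := by
  set small := Finset.Icc (-R : ℤ) R ∪ Finset.Icc (-W : ℤ) W ∪ Finset.Icc (k - W) (k + W)
  set large := (admissibleResidues k W).biUnion fun a ↦
    sifted {z ∈ Finset.Ico (-n : ℤ) (n + 1) | z ≡ a [ZMOD W]} R W
  have card_le : differenceCount (signedPrimes n) k ≤ #small + #large :=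
    (Finset.card_le_card (filter_sub_mem_signedPrimes_subset k n R hW.ne_zero)).trans
      (Finset.card_union_le _ _)
  have card_small_le : #small ≤ 2 * R + 4 * W + 3 := by
    have card_union_le := Finset.card_union_le (Finset.Icc (-R : ℤ) R ∪ Finset.Icc (-W : ℤ) W)
      (Finset.Icc (k - W) (k + W))
    have card_union_le' := Finset.card_union_le (Finset.Icc (-R : ℤ) R) (Finset.Icc (-W : ℤ) W)
    simp only [Int.card_Icc] at card_union_le card_union_le'
    lia
  have card_large_le : (#large : ℝ) ≤ (2 * n + 1) *
      (2 * Real.exp (-∑ q ∈ W.primeFactors, (q : ℝ)⁻¹) / Real.log (R + 1)) + W * (R : ℝ) ^ 6 :=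
    calc
      (#large : ℝ) ≤ _ := card_biUnion_sifted_le k n hR (Nat.pos_of_ne_zero hW.ne_zero)
      _ = (2 * n + 1) * (#(admissibleResidues k W) / (W * sieveDenominator R W)) +
          #(admissibleResidues k W) * (R : ℝ) ^ 6 := by ring
      _ ≤ _ := by
        gcongr ?_ * ?_ + ?_ * ?_
        · exact card_admissibleResidues_div_sieveDenominator_le hW hk hR
        · exact mod_cast card_admissibleResidues_le_self k W
  calc
    (differenceCount (signedPrimes n) k : ℝ) ≤ #large + #small := by
      rw [add_comm]
      exact mod_cast card_le
    _ ≤ _ := add_le_add card_large_le (mod_cast card_small_le)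

/-! ### Asymptotics -/

lemma exists_sieve_level {n : ℕ} (hn : 1 ≤ n) :
    ∃ R : ℕ, 1 ≤ R ∧ (R : ℝ) ^ 6 ≤ √n ∧ Real.log n / 12 ≤ Real.log (R + 1) := by
  have hn' : (1 : ℝ) ≤ n := mod_cast hn
  refine ⟨⌊(n : ℝ) ^ (1 / 12 : ℝ)⌋₊, ?_, ?_, ?_⟩
  · exact Nat.one_le_floor_iff _ |>.2 (Real.one_le_rpow hn' (by norm_num))
  · calc
      (⌊(n : ℝ) ^ (1 / 12 : ℝ)⌋₊ : ℝ) ^ 6 ≤ ((n : ℝ) ^ (1 / 12 : ℝ)) ^ 6 := by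
        gcongr
        exact Nat.floor_le (by positivity)
      _ = √n := by
        rw [Real.sqrt_eq_rpow, ← Real.rpow_natCast, ← Real.rpow_mul (by positivity)]
        norm_num
  · calc
      Real.log n / 12 = Real.log ((n : ℝ) ^ (1 / 12 : ℝ)) := by
        rw [Real.log_rpow (by positivity)]
        ring
      _ ≤ _ := Real.log_le_log (by positivity) (Nat.lt_floor_add_one _).le

lemma differenceCount_signedPrimes_le_div_log (hW : Squarefree W) (hk : IsCoprime (W : ℤ) k)
    {n : ℕ} (hn : 2 ≤ n) :
    (differenceCount (signedPrimes n) k : ℝ) ≤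
      72 * Real.exp (-∑ q ∈ W.primeFactors, (q : ℝ)⁻¹) * (n / Real.log n) +
        (5 * W + 5) * √n := by
  obtain ⟨R, hR, hR6, hlogR⟩ := exists_sieve_level (one_le_two.trans hn)
  have hn' : (1 : ℝ) < n := mod_cast hn
  have hlog : 0 < Real.log n := Real.log_pos hn'
  have hlogR_pos : 0 < Real.log (R + 1) := by linarith
  have one_le_sqrt : 1 ≤ √n := Real.one_le_sqrt.2 hn'.le
  have R_le_sqrt : (R : ℝ) ≤ √n :=
    (le_self_pow₀ (mod_cast hR) (by norm_num)).trans hR6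
  refine (differenceCount_signedPrimes_le hW hk n hR).trans ?_
  set E := Real.exp (-∑ q ∈ W.primeFactors, (q : ℝ)⁻¹)
  have main_term : (2 * n + 1) * (2 * E / Real.log (R + 1)) ≤ 72 * E * (n / Real.log n) :=
    calc
      (2 * n + 1) * (2 * E / Real.log (R + 1)) ≤ 3 * n * (2 * E / (Real.log n / 12)) := by
        gcongr ?_ * (2 * E / ?_)
        linarith
      _ = 72 * E * (n / Real.log n) := by ring
  have error_term : W * (R : ℝ) ^ 6 ≤ W * √n := by gcongr
  have le_mul_sqrt : (W : ℝ) ≤ W * √n := le_mul_of_one_le_right (by positivity) one_le_sqrt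
  linarith

lemma primeCounting_le_card_signedPrimes (n : ℕ) : n.primeCounting ≤ #(signedPrimes n) := by
  rw [← Nat.primesLE_card_eq_primeCounting]
  refine Finset.card_le_card_of_injOn Nat.cast (fun p hp ↦ ?_) Nat.cast_injective.injOn
  obtain ⟨hpn, hp⟩ := Nat.mem_primesLE.1 hp
  exact mem_signedPrimes.2 ⟨by lia, by simpa using hp⟩

lemma eventually_div_two_mul_log_le_card_signedPrimes :
    ∀ᶠ n : ℕ in atTop, n / (2 * Real.log n) ≤ #(signedPrimes n) := by
  have log_div_tendsto : Tendsto (fun n : ℕ ↦ Real.log (n + 1) / (n + 1)) atTop (𝓝 0) := by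
    have h := Real.isLittleO_log_id_atTop.tendsto_div_nhds_zero.comp
      (tendsto_atTop_add_const_right _ 1 (tendsto_natCast_atTop_atTop (R := ℝ)))
    simpa [Function.comp_def] using h
  filter_upwards [log_div_tendsto.eventually (gt_mem_nhds (by norm_num : (0 : ℝ) < 1 / 20)),
    eventually_ge_atTop 2] with n hn hn2
  have hn2' : (2 : ℝ) ≤ n := mod_cast hn2
  have hlog : 0 < Real.log n := Real.log_pos (by linarith)
  rw [div_lt_iff₀ (by positivity)] at hn
  have half_le : (n : ℝ) / 2 ≤ n * Real.log 2 - Real.log (n + 1) := by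
    nlinarith [Real.log_two_gt_d9]
  calc
    n / (2 * Real.log n) = n / 2 / Real.log n := by ring
    _ ≤ (n * Real.log 2 - Real.log (n + 1)) / Real.log n := by gcongr
    _ ≤ n.primeCounting := Chebyshev.pi_ge n
    _ ≤ #(signedPrimes n) := mod_cast primeCounting_le_card_signedPrimes n

lemma eventually_differenceCount_div_card_signedPrimes_le (hW : Squarefree W)
    (hk : IsCoprime (W : ℤ) k) : ∀ᶠ n : ℕ in atTop,
      (differenceCount (signedPrimes n) k : ℝ) / #(signedPrimes n) ≤
        144 * Real.exp (-∑ q ∈ W.primeFactors, (q : ℝ)⁻¹) +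
          (10 * W + 10) * (Real.log n / √n) := by
  filter_upwards [eventually_div_two_mul_log_le_card_signedPrimes, eventually_ge_atTop 2]
    with n hcard hn
  have hn' : (1 : ℝ) < n := mod_cast hn
  have hlog : 0 < Real.log n := Real.log_pos hn'
  set E := Real.exp (-∑ q ∈ W.primeFactors, (q : ℝ)⁻¹)
  calc
    (differenceCount (signedPrimes n) k : ℝ) / #(signedPrimes n)
      ≤ (72 * E * (n / Real.log n) + (5 * W + 5) * √n) / (n / (2 * Real.log n)) := by
      gcongr
      exact differenceCount_signedPrimes_le_div_log hW hk hn
    _ = 144 * E + (10 * W + 10) * (Real.log n * (√n / n)) := by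
      field_simp
      ring
    _ = 144 * E + (10 * W + 10) * (Real.log n / √n) := by
      rw [Real.sqrt_div_self', mul_one_div]

end

lemma not_summable_inv_primes_not_dvd {m : ℕ} (hm : m ≠ 0) :
    ¬ Summable fun q : ℕ ↦ if q.Prime ∧ ¬ q ∣ m then (q : ℝ)⁻¹ else 0 := by
  refine fun h ↦ not_summable_one_div_on_primes ((summable_congr_cofinite ?_).1 h)
  have divisors_finite : {q | q ∣ m}.Finite := m.divisors.finite_toSet.subset fun q hq ↦ by
    simpa [hm] using hq
  filter_upwards [divisors_finite.compl_mem_cofinite] with q hq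
  have hq' : ¬ q ∣ m := hq
  by_cases hprime : q.Prime <;> simp [hprime, hq']

lemma exists_squarefree_isCoprime_le_sum_inv {k : ℤ} (hk : k ≠ 0) (M : ℝ) :
    ∃ W : ℕ, Squarefree W ∧ IsCoprime (W : ℤ) k ∧ M ≤ ∑ q ∈ W.primeFactors, (q : ℝ)⁻¹ := by
  have partial_sums_tendsto := (not_summable_iff_tendsto_nat_atTop_of_nonneg
    fun q ↦ by positivity).1 (not_summable_inv_primes_not_dvd (Int.natAbs_ne_zero.2 hk))
  obtain ⟨N, hN⟩ := (partial_sums_tendsto.eventually_ge_atTop M).exists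
  rw [← Finset.sum_filter] at hN
  set T : Finset ℕ := {q ∈ Finset.range N | q.Prime ∧ ¬ q ∣ k.natAbs}
  have hT : ∀ q ∈ T, q.Prime ∧ ¬ q ∣ k.natAbs := fun q hq ↦ (Finset.mem_filter.1 hq).2
  have T_prime : ∀ q ∈ T, q.Prime := fun q hq ↦ (hT q hq).1
  refine ⟨∏ q ∈ T, q, ?_, ?_, by rwa [Nat.primeFactors_prod T_prime]⟩
  · exact Finset.squarefree_prod_of_pairwise_isCoprime
      (fun p hp q hq hpq ↦ Nat.coprime_iff_isRelPrime.1
        ((Nat.coprime_primes (T_prime p hp) (T_prime q hq)).2 hpq))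
      fun q hq ↦ (T_prime q hq).prime.squarefree
  · rw [Nat.cast_prod]
    exact IsCoprime.prod_left fun q hq ↦ Int.isCoprime_iff_gcd_eq_one.2
      ((T_prime q hq).coprime_iff_not_dvd.2 (hT q hq).2)

theorem tendsto_differenceCount_div_card_signedPrimes {k : ℤ} (hk : k ≠ 0) :
    Tendsto (fun n ↦ (differenceCount (signedPrimes n) k : ℝ) / #(signedPrimes n)) atTop
      (𝓝 0) := by
  refine tendsto_order.2 ⟨fun a ha ↦ .of_forall fun n ↦ ha.trans_le (by positivity),
    fun ε hε ↦ ?_⟩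
  obtain ⟨W, hW, hWk, hsum⟩ := exists_squarefree_isCoprime_le_sum_inv hk (-Real.log (ε / 288))
  have exp_le : Real.exp (-∑ q ∈ W.primeFactors, (q : ℝ)⁻¹) ≤ ε / 288 := by
    rw [← Real.le_log_iff_exp_le (by positivity)]
    linarith
  have error_tendsto :
      Tendsto (fun n : ℕ ↦ (10 * W + 10) * (Real.log n / √n)) atTop (𝓝 0) := by
    have h := (isLittleO_log_rpow_atTop one_half_pos).tendsto_div_nhds_zero.comp
      (tendsto_natCast_atTop_atTop (R := ℝ))
    simpa [Real.sqrt_eq_rpow] using h.const_mul (10 * W + 10 : ℝ)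
  filter_upwards [eventually_differenceCount_div_card_signedPrimes_le hW hWk,
    error_tendsto.eventually (gt_mem_nhds (half_pos hε))] with n hratio herror
  linarith

/-! ### The autocorrelation of a set of integers -/

lemma sum_sub_eq_sum_ite_sub_mem {M : Type*} [AddCommMonoid M] (A : Finset ℤ) {s : Finset ℤ}
    {g : ℤ → M} (hs : ∀ k, g k ≠ 0 → k ∈ s) (x : ℤ) :
    ∑ y ∈ A, g (x - y) = ∑ k ∈ s, if x - k ∈ A then g k else 0 := by
  rw [← Finset.sum_filter, ← Finset.sum_filter_of_ne fun y _ ↦ hs (x - y)]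
  exact Finset.sum_nbij' (x - ·) (x - ·) (by simp; tauto) (by simp; tauto) (by simp) (by simp)
    (by simp)

lemma autoCorr_image_intCast_s3 (A : Finset ℤ) {s : Finset ℤ} {f : ℝ → ℂ}
    (hs : ∀ k : ℤ, f k ≠ 0 → k ∈ s) :
    autoCorr ((Int.cast : ℤ → ℝ) '' A) f =
      ∑ k ∈ s, f k * ((differenceCount A k / #A : ℝ) : ℂ) := by
  have sum_eq : ∑ x ∈ A, ∑ y ∈ A, f (x - y) = ∑ k ∈ s, f k * differenceCount A k := by
    simp_rw [← Int.cast_sub, sum_sub_eq_sum_ite_sub_mem A (g := fun k : ℤ ↦ f k) hs]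
    rw [Finset.sum_comm]
    simp_rw [← Finset.sum_filter, Finset.sum_const, nsmul_eq_mul, mul_comm, differenceCount]
  have inner_sum (x : ℤ) : ∑ᶠ y ∈ (Int.cast : ℤ → ℝ) '' A, f (x - y) = ∑ y ∈ A, f (x - y) := by
    rw [finsum_mem_image Int.cast_injective.injOn, finsum_mem_coe_finset]
  rw [autoCorr, Set.ncard_image_of_injective _ Int.cast_injective, Set.ncard_coe_finset,
    finsum_mem_image Int.cast_injective.injOn, finsum_mem_coe_finset]
  simp_rw [inner_sum]
  rw [sum_eq, Finset.mul_sum]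
  refine Finset.sum_congr rfl fun k _ ↦ ?_
  push_cast
  ring

theorem tendsto_autoCorr_image_intCast_s3 {ι : Type*} {l : Filter ι} {A : ι → Finset ℤ}
    (hA : ∀ᶠ i in l, (A i).Nonempty)
    (hdiff : ∀ k ≠ 0, Tendsto (fun i ↦ (differenceCount (A i) k : ℝ) / #(A i)) l (𝓝 0))
    {f : ℝ → ℂ} (hf : (Function.support fun k : ℤ ↦ f k).Finite) :
    Tendsto (fun i ↦ autoCorr ((Int.cast : ℤ → ℝ) '' A i) f) l (𝓝 (f 0)) := by
  have ratio_tendsto (k : ℤ) : Tendsto (fun i ↦ (differenceCount (A i) k : ℝ) / #(A i)) l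
      (𝓝 (if k = 0 then 1 else 0)) := by
    split_ifs with hk
    · refine tendsto_const_nhds.congr' (hA.mono fun i hi ↦ ?_)
      simp [hk, differenceCount, hi.card_pos.ne']
    · exact hdiff k hk
  have hs : ∀ k : ℤ, f k ≠ 0 → k ∈ insert 0 hf.toFinset := fun k hk ↦ by simp [hk]
  simp_rw [autoCorr_image_intCast_s3 _ hs]
  have limit_eq : f 0 = ∑ k ∈ insert 0 hf.toFinset,
      f k * ((if k = 0 then 1 else 0 : ℝ) : ℂ) := by
    rw [Finset.sum_eq_single_of_mem 0 (Finset.mem_insert_self _ _) fun k _ hk ↦ by simp [hk]]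
    simp
  rw [limit_eq]
  exact tendsto_finsetSum _ fun k _ ↦
    ((Complex.continuous_ofReal.tendsto _).comp (ratio_tendsto k)).const_mul _

lemma primesR_inter_Icc (n : ℕ) :
    PrimesR ∩ Set.Icc (-(n : ℝ)) n = (Int.cast : ℤ → ℝ) '' signedPrimes n := by
  ext x
  simp only [PrimesR, Set.mem_inter_iff, Set.mem_ofPred_eq, Set.mem_Icc, Set.mem_image,
    Finset.mem_coe, mem_signedPrimes]
  constructor
  · rintro ⟨⟨p, hp, rfl | rfl⟩, hlower, hupper⟩
    · have hpn : p ≤ n := mod_cast hupper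
      exact ⟨p, ⟨by lia, by simpa using hp⟩, by simp⟩
    · have hpn : p ≤ n := Nat.cast_le.1 (neg_le_neg_iff.1 hlower)
      exact ⟨-p, ⟨by lia, by simpa using hp⟩, by simp⟩
  · rintro ⟨z, ⟨⟨hlower, hupper⟩, hz⟩, rfl⟩
    refine ⟨⟨z.natAbs, hz, ?_⟩, mod_cast hlower, mod_cast hupper⟩
    exact (Int.natAbs_eq z).imp (fun h ↦ by simpa using congrArg (Int.cast : ℤ → ℝ) h)
      fun h ↦ by simpa using congrArg (Int.cast : ℤ → ℝ) h

lemma eventually_signedPrimes_nonempty : ∀ᶠ n in atTop, (signedPrimes n).Nonempty := by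
  filter_upwards [eventually_ge_atTop 2] with n hn
  exact ⟨2, mem_signedPrimes.2 ⟨by lia, Nat.prime_two⟩⟩

lemma finite_support_intCast {f : ℝ → ℂ} (hf : HasCompactSupport f) :
    (Function.support fun k : ℤ ↦ f k).Finite :=
  (hf.comp_isClosedEmbedding Int.isClosedEmbedding_coe_real).isCompact.finite_of_discrete.subset
    (subset_tsupport _)

theorem primes_counting_autocorrelation_symmetric_intervals_general {f : ℝ → ℂ}
    (hf : (Function.support fun k : ℤ ↦ f k).Finite) :
    Tendsto (fun n : ℕ ↦ autoCorr (PrimesR ∩ Set.Icc (-(n : ℝ)) n) f) atTop (𝓝 (f 0)) := by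
  simp_rw [primesR_inter_Icc]
  exact tendsto_autoCorr_image_intCast_s3 eventually_signedPrimes_nonempty
    (fun _ hk ↦ tendsto_differenceCount_div_card_signedPrimes hk) hf

theorem primes_counting_autocorrelation_symmetric_intervals :
    ∀ f : ℝ → ℂ, Continuous f → HasCompactSupport f →
      Tendsto (fun n : ℕ => autoCorr (PrimesR ∩ Set.Icc (-(n : ℝ)) (n : ℝ)) f)
        atTop (nhds (f 0)) :=
  fun _ _ hf ↦ primes_counting_autocorrelation_symmetric_intervals_general
    (finite_support_intCast hf)
end
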